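/- Let R be a d-dimensional Noetherian local domain containing a field and let x_1,…,x_d be a system of parameters of R. Then 𝔥^d_x(M) = rank(M) for every finitely generated R-module M, where rank(M) is the dimension of Frac(R) ⊗_R M over the fraction field Frac(R). In particular, 𝔥^d_x is additive: for every short exact sequence 0 → L → M → N → 0 of finitely generated R-modules, 𝔥^d_x(M) = 𝔥^d_x(L) + 𝔥^d_x(N). -/

import Mathlib

open scoped BigOperators ENNReal

universe u v

/-- A filtration of `M` of length `h` whose factors are cyclic modules killed by `J`. -/
def HasQLFiltration (S : Type u) [CommRing S] (J : Ideal S)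
    (M : Type v) [AddCommGroup M] [Module S M] (h : ℕ) : Prop :=
  ∃ c : Fin (h + 1) → Submodule S M,
    Monotone c ∧ c 0 = ⊥ ∧ c (Fin.last h) = ⊤ ∧
    ∀ i : Fin h,
      (∃ m : M, c i.succ = c i.castSucc ⊔ Submodule.span S {m}) ∧
      ∀ a ∈ J, ∀ x ∈ c i.succ, a • x ∈ c i.castSucc

/-- The `J`-quasilength of `M`. -/
noncomputable def quasilength (S : Type u) [CommRing S] (J : Ideal S)
    (M : Type v) [AddCommGroup M] [Module S M] : ℕ∞ :=
  sInf {n : ℕ∞ | ∃ h : ℕ, n = (h : ℕ∞) ∧ HasQLFiltration S J M h}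

/-- The ideal `(x₁^{t₁}, …, x_d^{t_d})`. -/
def powerIdeal {R : Type u} [CommRing R] {d : ℕ} (x : Fin d → R) (t : Fin d → ℕ) : Ideal R :=
  Ideal.span (Set.range fun i => x i ^ t i)

/-- The content `𝔥^d_x(M)` of `M` with respect to `x₁, …, x_d`. -/
noncomputable def content {R : Type u} [CommRing R] {d : ℕ} (x : Fin d → R)
    (M : Type v) [AddCommGroup M] [Module R M] : ℝ≥0∞ :=
  ⨆ s : ℕ, ⨅ t : {t : Fin d → ℕ // ∀ i, s ≤ t i ∧ 0 < t i},
    (quasilength R (Ideal.span (Set.range x))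
        (M ⧸ (powerIdeal x (t : Fin d → ℕ) • (⊤ : Submodule R M))) : ℝ≥0∞) /
      ∏ i, ((t : Fin d → ℕ) i : ℝ≥0∞)


open scoped TensorProduct


/-!
By counting ranks, a finitely generated module `M` of rank `r` and `R ^ r` map to each other with
torsion cokernel, and torsion only costs `O(n ^ (d - 1))` steps modulo `(x₁ ^ n, …, x_d ^ n)`. Hence
the theorem amounts to the bound that a filtration of `R ^ r ⧸ I_t R ^ r` with cyclic factors killed
by `I = (x₁, …, x_d)` has at least `r · t₁ ⋯ t_d` steps.

Such filtrations can be rescaled, so in characteristic `p` one may assume `t = (q, …, q)` with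
`q = p ^ e`. Base change along powers of Frobenius and iteration turn `h` steps into the inequality
`r ^ k · ℓ(R ⧸ (x₁ ^ N, …, x_d ^ N)) ≤ h ^ k · ℓ(R ⧸ I)` with `N = q ^ k`, whereas the length on the
left is at least a positive multiple of `N ^ d`; letting `k` grow, `r · q ^ d ≤ h`.

In characteristic zero one may complete `R`, which is then finite over the subring `K⟦X₁, …, X_d⟧`
with `X i ↦ x i`. A given filtration involves only finitely many elements, so it lives in a finite
algebra over a finitely generated subring `E` of `K⟦X₁, …, X_d⟧` containing the variables. Such an
`E` maps to a power series ring over a field of characteristic `p`, with the variables still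
generating the maximal ideal: write `E` by a primitive element over a polynomial ring, approximate
by polynomials in the last variable using Weierstrass preparation, specialise the coefficients by
induction on `d`, and return to power series by Newton's method.
-/

section SpanImage

variable {A S : Type*} [CommRing A] [CommRing S] {φ : A →+* S} {M M' : Type*}
  [AddCommGroup M] [Module A M] [AddCommGroup M'] [Module S M']

theorem span_image_sup_span_singleton (f : M →ₛₗ[φ] M') (N : Submodule A M) (m : M) :
    Submodule.span S (f '' ↑(N ⊔ Submodule.span A {m})) =
      Submodule.span S (f '' N) ⊔ Submodule.span S {f m} := by
  apply le_antisymm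
  · rw [Submodule.span_le]
    rintro _ ⟨v, hv, rfl⟩
    obtain ⟨y, hy, z, hz, rfl⟩ := Submodule.mem_sup.mp hv
    obtain ⟨b, rfl⟩ := Submodule.mem_span_singleton.mp hz
    rw [map_add, LinearMap.map_smulₛₗ]
    exact Submodule.add_mem_sup (Submodule.subset_span ⟨y, hy, rfl⟩)
      (Submodule.smul_mem _ _ (Submodule.mem_span_singleton_self _))
  · rw [sup_le_iff, Submodule.span_singleton_le_iff_mem]
    exact ⟨Submodule.span_mono (Set.image_mono (le_sup_left (a := N))),
      Submodule.subset_span ⟨m, Submodule.mem_sup_right (Submodule.mem_span_singleton_self m), rfl⟩⟩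

theorem span_image_smul (f : M →ₛₗ[φ] M') (I : Ideal A) (N : Submodule A M) :
    Submodule.span S (f '' ↑(I • N)) = I.map φ • Submodule.span S (f '' N) := by
  rw [Ideal.map, Submodule.span_smul_span]
  apply le_antisymm
  · rw [Submodule.span_le]
    rintro _ ⟨v, hv, rfl⟩
    induction hv using Submodule.smul_induction_on' with
    | smul a ha n hn =>
      rw [LinearMap.map_smulₛₗ]
      exact Submodule.subset_span (Set.smul_mem_smul ⟨a, ha, rfl⟩ ⟨n, hn, rfl⟩)
    | add m _ n _ hm hn => rw [map_add]; exact add_mem hm hn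
  · rw [Submodule.span_le]
    rintro _ ⟨_, ⟨a, ha, rfl⟩, _, ⟨n, hn, rfl⟩, rfl⟩
    exact Submodule.subset_span ⟨a • n, Submodule.smul_mem_smul ha hn, f.map_smulₛₗ a n⟩

end SpanImage

theorem length_quotient_le_add_length_quotient_ideal {A S : Type*} [CommRing A] [CommRing S]
    [Algebra A S] {M : Type*} [AddCommGroup M] [Module S M] [Module A M] [IsScalarTower A S M]
    {I : Ideal S} {P : Submodule S M} {m : M} (hm : ∀ a ∈ I, a • m ∈ P) :
    Module.length A (M ⧸ P) ≤
      Module.length A (M ⧸ (P ⊔ Submodule.span S {m})) + Module.length A (S ⧸ I) := by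
  let g : (M ⧸ P) →ₗ[A] (M ⧸ (P ⊔ Submodule.span S {m})) :=
    (Submodule.factor (le_sup_left : P ≤ P ⊔ Submodule.span S {m})).restrictScalars A
  let f : (S ⧸ I) →ₗ[A] (M ⧸ P) :=
    (Submodule.mapQ I P (LinearMap.toSpanSingleton S M m) fun a ha => hm a ha).restrictScalars A
  have hg : Function.Surjective g :=
    Submodule.factor_surjective (le_sup_left : P ≤ P ⊔ Submodule.span S {m})
  have hker : LinearMap.ker g ≤ LinearMap.range f := by
    intro z hz
    obtain ⟨z, rfl⟩ := P.mkQ_surjective z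
    have hzP : z ∈ P ⊔ Submodule.span S {m} := (Submodule.Quotient.mk_eq_zero _).mp hz
    obtain ⟨y, hy, w, hw, rfl⟩ := Submodule.mem_sup.mp hzP
    obtain ⟨b, rfl⟩ := Submodule.mem_span_singleton.mp hw
    refine ⟨Ideal.Quotient.mk I b, ?_⟩
    change P.mkQ (b • m) = _
    rw [map_add, show P.mkQ y = 0 by simpa using hy, zero_add]
  rw [Module.length_eq_add_of_exact (LinearMap.ker g).subtype g (Submodule.injective_subtype _) hg
    (LinearMap.exact_subtype_ker_map g), add_comm]
  gcongr
  calc Module.length A (LinearMap.ker g)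
      ≤ Module.length A (LinearMap.range f) :=
        Module.length_le_of_injective _ (Submodule.inclusion_injective hker)
    _ ≤ Module.length A (S ⧸ I) :=
        Module.length_le_of_surjective f.rangeRestrict f.surjective_rangeRestrict

/-- `CyclicChain J N P h` says that `P` is reached from `N` in `h` steps, each adjoining a single
element that `J` multiplies into the submodule reached so far. A quasilength filtration of `M ⧸ N`
is a chain from `N` to `⊤`; keeping the bottom `N` free makes chains composable. -/
inductive CyclicChain {S : Type*} [CommRing S] {M : Type*} [AddCommGroup M] [Module S M]
    (J : Ideal S) (N : Submodule S M) : Submodule S M → ℕ → Prop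
  | refl : CyclicChain J N N 0
  | adjoin {P : Submodule S M} {h : ℕ} (m : M) :
      CyclicChain J N P h → (∀ a ∈ J, a • m ∈ P) →
      CyclicChain J N (P ⊔ Submodule.span S {m}) (h + 1)

namespace CyclicChain

section Basic

variable {S : Type*} [CommRing S] {M M' : Type*} [AddCommGroup M] [Module S M]
  [AddCommGroup M'] [Module S M'] {I J : Ideal S} {N P Q : Submodule S M} {h k : ℕ}

theorem trans (hNP : CyclicChain J N P h) (hPQ : CyclicChain J P Q k) :
    CyclicChain J N Q (h + k) := by
  induction hPQ with
  | refl => exact hNP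
  | adjoin m _ hm ih => exact ih.adjoin m hm

theorem sup (hNP : CyclicChain J N P h) (T : Submodule S M) :
    CyclicChain J (N ⊔ T) (P ⊔ T) h := by
  induction hNP with
  | refl => exact refl
  | adjoin m _ hm ih =>
    rw [sup_right_comm]
    exact ih.adjoin m fun a ha => Submodule.mem_sup_left (hm a ha)

theorem top_of_le {T : Submodule S M} (hN : CyclicChain J N ⊤ h) (hNT : N ≤ T) :
    CyclicChain J T ⊤ h := by
  simpa only [sup_eq_right.mpr hNT, top_sup_eq] using hN.sup T

theorem mono_ideal (hNP : CyclicChain J N P h) (hIJ : I ≤ J) : CyclicChain I N P h := by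
  induction hNP with
  | refl => exact refl
  | adjoin m _ hm ih => exact ih.adjoin m fun a ha => hm a (hIJ ha)

theorem of_finset_image {ι : Type*} (v : ι → M) (s : Finset ι)
    (hv : ∀ i ∈ s, ∀ a ∈ J, a • v i ∈ N) :
    CyclicChain J N (N ⊔ Submodule.span S (v '' s)) s.card := by
  classical
  induction s using Finset.induction_on with
  | empty => simpa using refl
  | insert i s hi ih =>
    rw [Finset.card_insert_of_notMem hi, Finset.coe_insert, Set.image_insert_eq,
      Submodule.span_insert, sup_comm (Submodule.span S {v i}), ← sup_assoc]
    exact (ih fun j hj => hv j (Finset.mem_insert_of_mem hj)).adjoin _ fun a ha =>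
      Submodule.mem_sup_left (hv i (Finset.mem_insert_self i s) a ha)

theorem of_span_range_eq_top {ι : Type*} [Fintype ι] (v : ι → M)
    (hv : Submodule.span S (Set.range v) = ⊤) (hJ : ∀ i, ∀ a ∈ J, a • v i ∈ N) :
    CyclicChain J N ⊤ (Fintype.card ι) := by
  simpa [hv] using of_finset_image v Finset.univ fun i _ => hJ i

theorem exists_of_fg (hNP : N ≤ P) (hP : P.FG) (hJ : ∀ a ∈ J, ∀ m ∈ P, a • m ∈ N) :
    ∃ h, CyclicChain J N P h := by
  obtain ⟨s, rfl⟩ := hP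
  have hs := of_finset_image (J := J) (N := N) id s
    fun m hm a ha => hJ a ha m (Submodule.subset_span hm)
  rw [Set.image_id, sup_eq_right.mpr hNP] at hs
  exact ⟨_, hs⟩

theorem exists_pow [IsNoetherianRing S] (J : Ideal S) (n : ℕ) : ∃ h, CyclicChain J (J ^ n) ⊤ h := by
  induction n with
  | zero => exact ⟨0, by rw [pow_zero, Ideal.one_eq_top]; exact refl⟩
  | succ n ih =>
    obtain ⟨h, hn⟩ := ih
    obtain ⟨k, hk⟩ := exists_of_fg (J := J) (Ideal.pow_le_pow_right n.le_succ)
      (IsNoetherian.noetherian (J ^ n))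
      fun a ha b hb => by rw [pow_succ', smul_eq_mul]; exact Ideal.mul_mem_mul ha hb
    exact ⟨k + h, hk.trans hn⟩

end Basic

section SpanImage

variable {A S : Type*} [CommRing A] [CommRing S] {φ : A →+* S} {M M' : Type*}
  [AddCommGroup M] [Module A M] [AddCommGroup M'] [Module S M']

theorem span_image {J : Ideal A} {N P : Submodule A M} {h : ℕ} (hNP : CyclicChain J N P h)
    (f : M →ₛₗ[φ] M') :
    CyclicChain (J.map φ) (Submodule.span S (f '' N)) (Submodule.span S (f '' P)) h := by
  induction hNP with
  | refl => exact refl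
  | @adjoin P _ m _ hm ih =>
    rw [span_image_sup_span_singleton]
    refine ih.adjoin (f m) fun a ha => ?_
    have hle : J.map φ • Submodule.span S {f m} ≤ Submodule.span S (f '' P) := by
      rw [Ideal.map, Submodule.span_smul_span, Submodule.span_le]
      rintro _ ⟨_, ⟨b, hb, rfl⟩, _, rfl, rfl⟩
      exact Submodule.subset_span ⟨b • m, hm b hb, f.map_smulₛₗ b m⟩
    exact hle (Submodule.smul_mem_smul ha (Submodule.mem_span_singleton_self _))

end SpanImage

section Linear

variable {S : Type*} [CommRing S] {M M' : Type*} [AddCommGroup M] [Module S M]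
  [AddCommGroup M'] [Module S M'] {I J : Ideal S} {N P : Submodule S M} {h k l : ℕ}

theorem map (hNP : CyclicChain J N P h) (f : M →ₗ[S] M') :
    CyclicChain J (N.map f) (P.map f) h := by
  simpa only [Ideal.map_id, ← Submodule.map_span, Submodule.span_eq] using hNP.span_image f

theorem comap {N P : Submodule S M'} (hNP : CyclicChain J N P h) {f : M →ₗ[S] M'}
    (hP : P ≤ LinearMap.range f) : CyclicChain J (N.comap f) (P.comap f) h := by
  induction hNP with
  | refl => exact refl
  | @adjoin P _ m _ hm ih =>
    obtain ⟨hPf, hmf⟩ := sup_le_iff.mp hP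
    obtain ⟨m, rfl⟩ := (Submodule.span_singleton_le_iff_mem _ _).mp hmf
    have hcomap : (P ⊔ Submodule.span S {f m}).comap f = P.comap f ⊔ Submodule.span S {m} := by
      have hker : LinearMap.ker f ≤ P.comap f ⊔ Submodule.span S {m} :=
        (LinearMap.ker_le_comap (p := P) f).trans le_sup_left
      rw [← sup_eq_left.mpr hker, ← Submodule.comap_map_eq, Submodule.map_sup,
        Submodule.map_comap_eq_of_le hPf, Submodule.map_span, Set.image_singleton]
    rw [hcomap]
    exact (ih hPf).adjoin m fun a ha => by rw [Submodule.mem_comap, map_smul]; exact hm a ha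

theorem refine_adjoin {K : Ideal S} (hJK : CyclicChain I J K l) {m : M}
    (hm : ∀ a ∈ J, a • m ∈ P) :
    CyclicChain I P (P ⊔ Submodule.map (LinearMap.toSpanSingleton S M m) K) l := by
  have hJP : Submodule.map (LinearMap.toSpanSingleton S M m) J ≤ P := by
    rintro _ ⟨a, ha, rfl⟩
    exact hm a ha
  have hchain := (hJK.map (LinearMap.toSpanSingleton S M m)).sup P
  rwa [sup_eq_right.mpr hJP, sup_comm] at hchain

theorem refine_ideal (hNP : CyclicChain J N P h) (hIJ : CyclicChain I J ⊤ l) :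
    CyclicChain I N P (h * l) := by
  induction hNP with
  | refl => simpa using refl
  | adjoin m _ hm ih =>
    have hstep := ih.trans (hIJ.refine_adjoin hm)
    rwa [Submodule.map_top, ← LinearMap.span_singleton_eq_range, ← Nat.succ_mul] at hstep

theorem exists_seq (hNP : CyclicChain J N P h) :
    ∃ c : ℕ → Submodule S M, Monotone c ∧ c 0 = N ∧ (∀ i, h ≤ i → c i = P) ∧
      ∀ i < h, (∃ m, c (i + 1) = c i ⊔ Submodule.span S {m}) ∧
        ∀ a ∈ J, ∀ y ∈ c (i + 1), a • y ∈ c i := by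
  induction hNP with
  | refl => exact ⟨fun _ => N, monotone_const, rfl, fun _ _ => rfl, fun i hi => by simp at hi⟩
  | @adjoin P h m _ hm ih =>
    obtain ⟨c, hc, hc0, hcP, hstep⟩ := ih
    refine ⟨fun i => if i ≤ h then c i else P ⊔ Submodule.span S {m}, ?_, by simpa using hc0,
      fun i hi => if_neg (by lia), fun i hi => ?_⟩
    · intro i j hij
      dsimp only
      split_ifs with hi hj
      · exact hc hij
      · exact (hc hi).trans ((hcP h le_rfl).le.trans le_sup_left)
      · lia
      · exact le_rfl
    · dsimp only
      rw [if_pos (by lia : i ≤ h)]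
      rcases Nat.lt_succ_iff_lt_or_eq.mp hi with hi' | rfl
      · rw [if_pos (by lia : i + 1 ≤ h)]
        exact hstep i hi'
      · rw [if_neg (by lia), hcP _ le_rfl]
        refine ⟨⟨m, rfl⟩, fun a ha y hy => ?_⟩
        obtain ⟨z, hz, w, hw, rfl⟩ := Submodule.mem_sup.mp hy
        obtain ⟨b, rfl⟩ := Submodule.mem_span_singleton.mp hw
        rw [smul_add, smul_comm]
        exact add_mem (P.smul_mem a hz) (P.smul_mem b (hm a ha))

theorem of_hasQLFiltration (hM : HasQLFiltration S J M h) :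
    CyclicChain J (⊥ : Submodule S M) ⊤ h := by
  obtain ⟨c, -, hbot, htop, hstep⟩ := hM
  have hc : ∀ i : Fin (h + 1), CyclicChain J ⊥ (c i) i := by
    intro i
    induction i using Fin.induction with
    | zero => rw [hbot]; exact refl
    | succ i ih =>
      obtain ⟨⟨m, hm⟩, hJ⟩ := hstep i
      rw [hm]
      exact ih.adjoin m fun a ha => hJ a ha m <|
        hm ▸ Submodule.mem_sup_right (Submodule.mem_span_singleton_self m)
  simpa only [htop, Fin.val_last] using hc (Fin.last h)

theorem hasQLFiltration (hM : CyclicChain J (⊥ : Submodule S M) ⊤ h) : HasQLFiltration S J M h := by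
  obtain ⟨c, hc, hbot, htop, hstep⟩ := hM.exists_seq
  exact ⟨fun i => c i, fun _ _ hij => hc hij, hbot, htop _ le_rfl, fun i => hstep i i.2⟩

theorem hasQLFiltration_quotient_iff : HasQLFiltration S J (M ⧸ N) h ↔ CyclicChain J N ⊤ h := by
  constructor
  · intro hQ
    simpa using (of_hasQLFiltration hQ).comap N.range_mkQ.ge
  · intro hN
    apply hasQLFiltration
    simpa only [Submodule.map_top, Submodule.range_mkQ, N.mkQ_map_self] using hN.map N.mkQ

theorem quasilength_le (hN : CyclicChain J N ⊤ h) : quasilength S J (M ⧸ N) ≤ h :=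
  sInf_le ⟨h, rfl, hasQLFiltration_quotient_iff.mpr hN⟩

theorem le_quasilength (hN : ∀ h, CyclicChain J N ⊤ h → k ≤ h) : k ≤ quasilength S J (M ⧸ N) := by
  refine le_sInf ?_
  rintro _ ⟨h, rfl, hh⟩
  exact_mod_cast hN h (hasQLFiltration_quotient_iff.mp hh)

end Linear

section Length

variable {A S : Type*} [CommRing A] [CommRing S] [Algebra A S] {M : Type*} [AddCommGroup M]
  [Module S M] [Module A M] [IsScalarTower A S M] {I : Ideal S} {N P : Submodule S M} {h : ℕ}

theorem length_quotient_le_add (hNP : CyclicChain I N P h) :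
    Module.length A (M ⧸ N) ≤ Module.length A (M ⧸ P) + h * Module.length A (S ⧸ I) := by
  induction hNP with
  | refl => simp
  | @adjoin P h m _ hm ih =>
    calc Module.length A (M ⧸ N)
        ≤ Module.length A (M ⧸ P) + h * Module.length A (S ⧸ I) := ih
      _ ≤ Module.length A (M ⧸ (P ⊔ Submodule.span S {m})) + Module.length A (S ⧸ I) +
            h * Module.length A (S ⧸ I) :=
          add_le_add (length_quotient_le_add_length_quotient_ideal hm) le_rfl
      _ = _ := by push_cast; ring

theorem length_quotient_le (hN : CyclicChain I N ⊤ h) :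
    Module.length A (M ⧸ N) ≤ h * Module.length A (S ⧸ I) := by
  have : Subsingleton (M ⧸ (⊤ : Submodule S M)) := Submodule.Quotient.subsingleton_iff.mpr rfl
  simpa only [Module.length_eq_zero, zero_add] using hN.length_quotient_le_add (A := A)

end Length

end CyclicChain

section PowerIdeal

variable {S : Type*} [CommRing S] {d : ℕ} (x : Fin d → S)

theorem powerIdeal_update (t : Fin d → ℕ) (i : Fin d) (n : ℕ) :
    powerIdeal x (Function.update t i n) =
      Ideal.span ((fun j => x j ^ t j) '' {i}ᶜ) ⊔ Ideal.span {x i ^ n} := by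
  have himage : (fun j => x j ^ Function.update t i n j) '' {i}ᶜ = (fun j => x j ^ t j) '' {i}ᶜ :=
    Set.image_congr fun j hj => by rw [Function.update_of_ne hj]
  rw [powerIdeal, ← Set.image_univ, ← Set.compl_union_self {i}, Set.image_union, Ideal.span_union,
    himage, Set.image_singleton, Function.update_self]

theorem powerIdeal_antitone : Antitone (powerIdeal x) := by
  intro s t hst
  rw [powerIdeal, Ideal.span_le]
  rintro _ ⟨i, rfl⟩
  exact Ideal.mem_of_dvd _ (pow_dvd_pow _ (hst i)) (Ideal.subset_span ⟨i, rfl⟩)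

theorem map_powerIdeal {S' : Type*} [CommRing S'] (φ : S →+* S') (t : Fin d → ℕ) :
    (powerIdeal x t).map φ = powerIdeal (fun i => φ (x i)) t := by
  rw [powerIdeal, powerIdeal, Ideal.map_span, ← Set.range_comp]
  simp only [Function.comp_def, map_pow]

theorem powerIdeal_one : powerIdeal x (fun _ => 1) = Ideal.span (Set.range x) := by
  simp only [powerIdeal, pow_one]

theorem span_pow_le_powerIdeal (n : ℕ) :
    Ideal.span (Set.range x) ^ (d * n + 1) ≤ powerIdeal x (fun _ => n) := by
  classical
  suffices hfinset : ∀ s : Finset (Fin d), Ideal.span (x '' s) ^ (s.card * n + 1) ≤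
      Ideal.span ((fun i => x i ^ n) '' s) by
    simpa [powerIdeal] using hfinset Finset.univ
  intro s
  induction s using Finset.induction_on with
  | empty => simp
  | insert a s ha ih =>
    rw [Finset.card_insert_of_notMem ha, Finset.coe_insert, Set.image_insert_eq,
      Set.image_insert_eq, Ideal.span_insert, Ideal.span_insert,
      show (s.card + 1) * n + 1 = n + (s.card * n + 1) by ring]
    refine Ideal.sup_pow_add_le_pow_sup_pow.trans (sup_le_sup ?_ ih)
    rw [Ideal.span_singleton_pow]

end PowerIdeal

namespace CyclicChain

section Scaling

variable {S : Type*} [CommRing S] {M : Type*} [AddCommGroup M] [Module S M] {J : Ideal S}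
  {N P T : Submodule S M} {h d : ℕ}

theorem span_singleton_smul (hNP : CyclicChain J N P h) (y : S) :
    CyclicChain J (Ideal.span {y} • N) (Ideal.span {y} • P) h := by
  rw [Submodule.ideal_span_singleton_smul, Submodule.ideal_span_singleton_smul]
  exact hNP.map (LinearMap.lsmul S M y)

theorem scale_singleton {y : S} (hT : CyclicChain J (T ⊔ Ideal.span {y} • ⊤) ⊤ h) (k : ℕ) :
    CyclicChain J (T ⊔ Ideal.span {y ^ k} • ⊤) ⊤ (k * h) := by
  induction k with
  | zero => simpa using refl
  | succ k ih =>
    have hstep := (hT.span_singleton_smul (y ^ k)).sup T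
    rw [Submodule.smul_sup, ← Submodule.mul_smul, Ideal.span_singleton_mul_span_singleton,
      ← pow_succ, sup_right_comm, sup_eq_right.mpr (Submodule.smul_le_right (N := T)),
      sup_comm _ T] at hstep
    rw [Nat.succ_mul, add_comm (k * h)]
    exact hstep.trans ih

variable {x : Fin d → S} {t : Fin d → ℕ}

theorem scale_update (hT : CyclicChain J (T ⊔ powerIdeal x t • ⊤) ⊤ h) (i : Fin d) (k : ℕ) :
    CyclicChain J (T ⊔ powerIdeal x (Function.update t i (k * t i)) • ⊤) ⊤ (k * h) := by
  rw [← Function.update_eq_self i t, powerIdeal_update, Submodule.sup_smul, ← sup_assoc] at hT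
  rw [powerIdeal_update, Submodule.sup_smul, ← sup_assoc, mul_comm, pow_mul]
  exact hT.scale_singleton k

theorem scale (hT : CyclicChain J (T ⊔ powerIdeal x t • ⊤) ⊤ h) (k : Fin d → ℕ) :
    CyclicChain J (T ⊔ powerIdeal x (fun i => k i * t i) • ⊤) ⊤ ((∏ i, k i) * h) := by
  classical
  suffices hfinset : ∀ s : Finset (Fin d),
      CyclicChain J (T ⊔ powerIdeal x (fun i => if i ∈ s then k i * t i else t i) • ⊤) ⊤
        ((∏ i ∈ s, k i) * h) by
    simpa using hfinset Finset.univ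
  intro s
  induction s using Finset.induction_on with
  | empty => simpa using hT
  | insert a s ha ih =>
    rw [Finset.prod_insert ha, mul_assoc]
    convert ih.scale_update a (k a) using 4
    funext i
    rcases eq_or_ne i a with rfl | hi
    · simp [ha]
    · simp [hi]

theorem scale_to_const (hchain : CyclicChain J (powerIdeal x t • (⊤ : Submodule S M)) ⊤ h)
    (ht : ∀ i, 0 < t i) (n : ℕ) :
    CyclicChain J (powerIdeal x (fun _ => n) • (⊤ : Submodule S M)) ⊤
      ((∏ i, (n / t i + 1)) * h) := by
  rw [← bot_sup_eq (powerIdeal x t • ⊤)] at hchain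
  have hscale := hchain.scale fun i => n / t i + 1
  rw [bot_sup_eq] at hscale
  refine hscale.top_of_le (Submodule.smul_mono_left (powerIdeal_antitone x fun i => ?_))
  calc n ≤ n / t i * t i + t i := (Nat.lt_div_mul_add (ht i)).le
    _ = (n / t i + 1) * t i := by ring

theorem powerIdeal_smul_top_pi (x : Fin d → S) (t : Fin d → ℕ) (r : ℕ) :
    CyclicChain (Ideal.span (Set.range x)) (powerIdeal x t • (⊤ : Submodule S (Fin r → S))) ⊤
      ((∏ i, t i) * r) := by
  have hone := of_span_range_eq_top (J := Ideal.span (Set.range x))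
    (N := ⊥ ⊔ powerIdeal x (fun _ => 1) • ⊤) _ (Pi.basisFun S (Fin r)).span_eq
    fun i a ha => by
      rw [bot_sup_eq, powerIdeal_one]
      exact Submodule.smul_mem_smul ha Submodule.mem_top
  simpa using hone.scale t

end Scaling

end CyclicChain

section Parameters

variable {A : Type*} [CommRing A] [IsLocalRing A] [IsNoetherianRing A] {d : ℕ}

open IsLocalRing

theorem exists_maximalIdeal_pow_le_span_range (hd : ringKrullDim A ≤ d) :
    ∃ (y : Fin d → A) (N : ℕ), (∀ i, y i ∈ maximalIdeal A) ∧
      maximalIdeal A ^ N ≤ Ideal.span (Set.range y) := by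
  obtain ⟨s, hs, hcard⟩ := (maximalIdeal A).exists_finset_card_eq_height_of_isNoetherianRing
  rw [← maximalIdeal_height_eq_ringKrullDim, ← hcard] at hd
  replace hd : s.card ≤ d := by exact_mod_cast hd
  have hrad : maximalIdeal A ≤ (Ideal.span (s : Set A)).radical := by
    rw [Ideal.radical_eq_sInf]
    refine le_sInf ?_
    rintro J ⟨hJ, hJp⟩
    exact hs.2 ⟨hJp, hJ⟩ (le_maximalIdeal hJp.ne_top)
  obtain ⟨N, hN⟩ := Ideal.exists_pow_le_of_le_radical_of_fg hrad (IsNoetherian.noetherian _)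
  have hlength : s.toList.length = s.card := Finset.length_toList s
  refine ⟨fun i => s.toList.getD i 0, N, fun i => ?_, hN.trans (Ideal.span_mono fun z hz => ?_)⟩
  · dsimp only
    rcases lt_or_ge i.1 s.toList.length with hi | hi
    · rw [List.getD_eq_getElem _ _ hi]
      exact hs.1.2 (Ideal.subset_span (Finset.mem_toList.mp (List.getElem_mem hi)))
    · rw [List.getD_eq_default _ _ hi]
      exact zero_mem _
  · obtain ⟨i, hi, rfl⟩ := List.getElem_of_mem (Finset.mem_toList.mpr hz)
    exact ⟨⟨i, by lia⟩, List.getD_eq_getElem _ _ hi⟩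

theorem exists_maximalIdeal_pow_le_span_range_sup_span_singleton {c : A}
    (hc : c ∈ nonZeroDivisors A) (hcm : c ∈ maximalIdeal A) (hd : ringKrullDim A ≤ (d + 1 : ℕ)) :
    ∃ (y : Fin d → A) (N : ℕ), (∀ i, y i ∈ maximalIdeal A) ∧
      maximalIdeal A ^ N ≤ Ideal.span (Set.range y) ⊔ Ideal.span {c} := by
  let π := Ideal.Quotient.mk (Ideal.span {c})
  have hπ : Function.Surjective π := Ideal.Quotient.mk_surjective
  have : Nontrivial (A ⧸ Ideal.span {c}) :=
    Ideal.Quotient.nontrivial_iff.mpr fun h => hcm (Ideal.span_singleton_eq_top.mp h)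
  have : IsLocalRing (A ⧸ Ideal.span {c}) := IsLocalRing.of_surjective' π hπ
  have hquot : ringKrullDim (A ⧸ Ideal.span {c}) ≤ d := by
    have hsucc := (ringKrullDim_quotient_succ_le_of_nonZeroDivisor hc).trans hd
    push_cast at hsucc
    exact ENat.WithBot.add_le_add_one_right_iff.mp hsucc
  have hmax : (maximalIdeal (A ⧸ Ideal.span {c})).comap π = maximalIdeal A :=
    eq_maximalIdeal (Ideal.comap_isMaximal_of_surjective π hπ)
  obtain ⟨y', N, hy'm, hN⟩ := exists_maximalIdeal_pow_le_span_range hquot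
  choose y hy using fun i => hπ (y' i)
  obtain rfl : (fun i => π (y i)) = y' := funext hy
  refine ⟨y, N, fun i => by rw [← hmax]; exact hy'm i, ?_⟩
  have hle : (maximalIdeal A ^ N).map π ≤ (Ideal.span (Set.range y)).map π := by
    rw [Ideal.map_pow, Ideal.map_span, ← Set.range_comp]
    exact (Ideal.pow_right_mono (Ideal.map_le_iff_le_comap.mpr hmax.ge) N).trans hN
  rwa [Ideal.map_le_iff_le_comap, Ideal.comap_map_of_surjective' π hπ, Ideal.mk_ker] at hle

theorem exists_forall_powerIdeal_le_powerIdeal {e : ℕ} {x : Fin d → A}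
    (hx : (Ideal.span (Set.range x)).radical = maximalIdeal A) {y : Fin e → A}
    (hy : ∀ i, y i ∈ maximalIdeal A) :
    ∃ k, ∀ n, 0 < n → powerIdeal y (fun _ => k * n) ≤ powerIdeal x (fun _ => n) := by
  obtain ⟨N, hN⟩ := Ideal.exists_pow_le_of_le_radical_of_fg hx.ge (IsNoetherian.noetherian _)
  refine ⟨N * (d + 1), fun n hn => Ideal.span_le.mpr ?_⟩
  rintro _ ⟨i, rfl⟩
  refine span_pow_le_powerIdeal x n (Ideal.pow_right_mono hN _ ?_)
  rw [← pow_mul]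
  refine Ideal.pow_le_pow_right ?_ (Ideal.pow_mem_pow (hy i) _)
  calc N * (d * n + 1) ≤ N * (d * n + n) := by gcongr; lia
    _ = N * (d + 1) * n := by ring

theorem exists_chain_span_singleton_sup_powerIdeal {c : A} (hc : c ∈ nonZeroDivisors A)
    (hd : ringKrullDim A ≤ d) {x : Fin d → A}
    (hx : (Ideal.span (Set.range x)).radical = maximalIdeal A) :
    ∃ C : ℕ, ∀ n, 0 < n → ∃ l, l * n ≤ C * n ^ d ∧
      CyclicChain (Ideal.span (Set.range x)) (Ideal.span {c} ⊔ powerIdeal x (fun _ => n)) ⊤ l := by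
  by_cases hcu : IsUnit c
  · refine ⟨0, fun n _ => ⟨0, by simp, ?_⟩⟩
    rw [Ideal.span_singleton_eq_top.mpr hcu, top_sup_eq]
    exact CyclicChain.refl
  obtain ⟨e, rfl⟩ : ∃ e, d = e + 1 := by
    refine Nat.exists_eq_succ_of_ne_zero fun hd0 => hcu ?_
    rw [hd0] at hd
    have : Ring.KrullDimLE 0 A := Ring.krullDimLE_iff.mpr hd
    have : IsArtinianRing A := isArtinianRing_iff_krullDimLE_zero.mpr this
    exact IsArtinianRing.isUnit_of_mem_nonZeroDivisors hc
  obtain ⟨y, N, hy, hN⟩ := exists_maximalIdeal_pow_le_span_range_sup_span_singleton hc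
    ((mem_maximalIdeal c).mpr hcu) hd
  obtain ⟨k, hk⟩ := exists_forall_powerIdeal_le_powerIdeal hx hy
  obtain ⟨l, hl⟩ := CyclicChain.exists_pow (maximalIdeal A) N
  have hxm : Ideal.span (Set.range x) ≤ maximalIdeal A := Ideal.le_radical.trans hx.le
  have hJ : CyclicChain (Ideal.span {c} ⊔ Ideal.span (Set.range y))
      (Ideal.span {c} ⊔ powerIdeal y (fun _ => 1) • ⊤) ⊤ 1 := by
    rw [powerIdeal_one, smul_eq_mul, Ideal.mul_top]
    simpa using CyclicChain.of_span_range_eq_top (fun _ : Fin 1 => (1 : A)) (by simp)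
      fun _ a ha => by simpa using ha
  rw [sup_comm] at hN
  refine ⟨k ^ e * l, fun n hn => ⟨(k * n) ^ e * l, le_of_eq (by rw [mul_pow]; ring), ?_⟩⟩
  have hscale := (hJ.scale fun _ => k * n).refine_ideal ((hl.top_of_le hN).mono_ideal hxm)
  simp only [Finset.prod_const, Finset.card_univ, Fintype.card_fin, mul_one] at hscale
  rw [smul_eq_mul, Ideal.mul_top] at hscale
  exact hscale.top_of_le (sup_le_sup_left (hk n hn) _)

end Parameters

section RankReduction

variable {R : Type*} [CommRing R] [IsDomain R] {M : Type*} [AddCommGroup M] [Module R M]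
  [Module.Finite R M]

theorem exists_ne_zero_forall_smul_eq_zero (hM : Module.finrank R M = 0) :
    ∃ c : R, c ≠ 0 ∧ ∀ m : M, c • m = 0 := by
  obtain ⟨c, hc, hc0⟩ :=
    Submodule.annihilator_top_inter_nonZeroDivisors (Module.finrank_eq_zero_iff_isTorsion.mp hM)
  exact ⟨c, nonZeroDivisors.ne_zero hc0, fun m =>
    Submodule.mem_annihilator.mp hc m Submodule.mem_top⟩

theorem exists_linearMap_pi_smul_mem_range {r : ℕ} (hr : Module.finrank R M = r) :
    ∃ (c : R) (f : (Fin r → R) →ₗ[R] M) (g : M →ₗ[R] (Fin r → R)), c ≠ 0 ∧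
      (∀ m, c • m ∈ LinearMap.range f) ∧ (∀ v, c • v ∈ LinearMap.range g) := by
  obtain ⟨b, hb⟩ := exists_linearIndependent_of_le_finrank hr.ge
  let f : (Fin r → R) →ₗ[R] M := Fintype.linearCombination R b
  have hf : Function.Injective f := hb.fintypeLinearCombination_injective
  have hcoker : Module.finrank R (M ⧸ LinearMap.range f) = 0 := by
    have hsum := Submodule.finrank_quotient_add_finrank (LinearMap.range f)
    rw [LinearMap.finrank_range_of_inj hf, hr, Module.finrank_fin_fun] at hsum
    lia
  obtain ⟨c, hc, hcM⟩ := exists_ne_zero_forall_smul_eq_zero hcoker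
  have hcf : ∀ m, c • m ∈ LinearMap.range f := fun m =>
    (Submodule.Quotient.mk_eq_zero _).mp (hcM (Submodule.Quotient.mk m))
  let e := LinearEquiv.ofInjective f hf
  let g : M →ₗ[R] (Fin r → R) :=
    e.symm.toLinearMap ∘ₗ (LinearMap.lsmul R M c).codRestrict (LinearMap.range f) hcf
  refine ⟨c, f, g, hc, hcf, fun v => ⟨f v, e.symm_apply_eq.mpr (Subtype.ext ?_)⟩⟩
  exact (map_smul f c v).symm

end RankReduction

theorem CyclicChain.powerIdeal_smul_top_of_smul_mem_range {R : Type*} [CommRing R] {d : ℕ}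
    {x : Fin d → R} {t : Fin d → ℕ} {M M' : Type*} [AddCommGroup M] [Module R M]
    [AddCommGroup M'] [Module R M'] {s h l : ℕ} {v : Fin s → M}
    (hv : Submodule.span R (Set.range v) = ⊤) {g : M' →ₗ[R] M} {c : R}
    (hg : ∀ m, c • m ∈ LinearMap.range g)
    (hM' : CyclicChain (Ideal.span (Set.range x)) (powerIdeal x t • (⊤ : Submodule R M')) ⊤ h)
    (hc : CyclicChain (Ideal.span (Set.range x)) (Ideal.span {c} ⊔ powerIdeal x t) ⊤ l) :
    CyclicChain (Ideal.span (Set.range x)) (powerIdeal x t • (⊤ : Submodule R M)) ⊤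
      (h + s * l) := by
  have hrange := (hM'.map g).sup (powerIdeal x t • (⊤ : Submodule R M))
  rw [Submodule.map_smul'', Submodule.map_top,
    sup_eq_right.mpr (smul_mono_right _ (le_top : LinearMap.range g ≤ ⊤))] at hrange
  have hcoker : CyclicChain (Ideal.span {c} ⊔ powerIdeal x t)
      (LinearMap.range g ⊔ powerIdeal x t • ⊤) ⊤ s := by
    simpa using of_span_range_eq_top v hv fun i a ha => by
      obtain ⟨u, hu, w, hw, rfl⟩ := Submodule.mem_sup.mp ha
      obtain ⟨b, rfl⟩ := Ideal.mem_span_singleton'.mp hu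
      rw [add_smul, mul_smul]
      exact Submodule.add_mem_sup (Submodule.smul_mem _ _ (hg _))
        (Submodule.smul_mem_smul hw Submodule.mem_top)
  exact hrange.trans (hcoker.refine_ideal hc)

section Limit

open Filter Topology

variable {d : ℕ} {t : Fin d → ℕ}

theorem prod_div_add_one_le {n : ℕ} (hn : 0 < n) :
    ((∏ i, (n / t i + 1) : ℕ) : ℝ) ≤ (∏ i, (1 / (t i : ℝ) + 1 / n)) * (n : ℝ) ^ d := by
  rw [← Fin.prod_const, ← Finset.prod_mul_distrib]
  push_cast
  refine Finset.prod_le_prod (fun i _ => by positivity) fun i _ => ?_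
  calc ((n / t i : ℕ) : ℝ) + 1 ≤ n / t i + 1 := by gcongr; exact Nat.cast_div_le
    _ = (1 / (t i : ℝ) + 1 / n) * n := by field_simp

theorem mul_prod_le_of_frequently (ht : ∀ i, 0 < t i) {r h C : ℕ}
    (hfreq : ∃ᶠ n : ℕ in atTop, ∃ l : ℕ, l * n ≤ C * n ^ d ∧
      r * n ^ d ≤ (∏ i, (n / t i + 1)) * h + r * l) :
    r * ∏ i, t i ≤ h := by
  have hbound : ∃ᶠ n : ℕ in atTop, (r : ℝ) ≤ (∏ i, (1 / (t i : ℝ) + 1 / n)) * h + r * C / n := by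
    refine (hfreq.and_eventually (eventually_gt_atTop 0)).mono ?_
    rintro n ⟨⟨l, hl, hh⟩, hn⟩
    have hl' : (l : ℝ) ≤ C * (n : ℝ) ^ d / n := by
      rw [le_div_iff₀ (by positivity)]
      exact_mod_cast hl
    refine le_of_mul_le_mul_right (a := (n : ℝ) ^ d) ?_ (by positivity)
    calc (r : ℝ) * (n : ℝ) ^ d ≤ ((∏ i, (n / t i + 1) : ℕ) : ℝ) * h + r * l := by exact_mod_cast hh
      _ ≤ (∏ i, (1 / (t i : ℝ) + 1 / n)) * (n : ℝ) ^ d * h + r * (C * (n : ℝ) ^ d / n) := by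
        gcongr
        exact prod_div_add_one_le hn
      _ = _ := by ring
  have hlim : Tendsto (fun n : ℕ => (∏ i, (1 / (t i : ℝ) + 1 / n)) * h + r * C / (n : ℝ)) atTop
      (𝓝 ((∏ i, (1 / (t i : ℝ) + 0)) * h + 0)) :=
    ((tendsto_finsetProd _ fun i _ =>
      tendsto_one_div_atTop_nhds_zero_nat.const_add _).mul_const _).add
        (tendsto_const_div_atTop_nhds_zero_nat _)
  have hle := ge_of_tendsto_of_frequently hlim hbound
  have hpos : (0 : ℝ) < ∏ i, (t i : ℝ) := Finset.prod_pos fun i _ => by exact_mod_cast ht i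
  simp only [add_zero, Finset.prod_div_distrib, Finset.prod_const_one] at hle
  rw [div_mul_eq_mul_div, one_mul, le_div_iff₀ hpos] at hle
  exact_mod_cast hle

end Limit

/-- Every quasilength filtration of a free module modulo `(x₁^{t₁}, …, x_d^{t_d})` has at least the
number of steps of the obvious one. This is the statement to which the theorem is reduced. -/
def FreeQuasilengthBound {R : Type*} [CommRing R] {d : ℕ} (x : Fin d → R) : Prop :=
  ∀ (r : ℕ) (t : Fin d → ℕ) (h : ℕ), (∀ i, 0 < t i) →
    CyclicChain (Ideal.span (Set.range x)) (powerIdeal x t • (⊤ : Submodule R (Fin r → R))) ⊤ h →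
      r * ∏ i, t i ≤ h

section Content

variable {R : Type u} [CommRing R] {d : ℕ} {x : Fin d → R}

theorem le_content {M : Type v} [AddCommGroup M] [Module R M] {r : ℕ}
    (hM : ∀ (t : Fin d → ℕ) (h : ℕ), (∀ i, 0 < t i) →
      CyclicChain (Ideal.span (Set.range x)) (powerIdeal x t • (⊤ : Submodule R M)) ⊤ h →
        r * ∏ i, t i ≤ h) :
    r ≤ content x M := by
  refine le_iSup_of_le 0 (le_iInf fun ⟨t, ht⟩ => ?_)
  have hprod : ∏ i, (t i : ℝ≥0∞) = (∏ i, t i : ℕ) := (Nat.cast_prod _ _).symm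
  have hne : ((∏ i, t i : ℕ) : ℝ≥0∞) ≠ 0 :=
    Nat.cast_ne_zero.mpr (Finset.prod_pos fun i _ => (ht i).2).ne'
  rw [hprod, ENNReal.le_div_iff_mul_le (Or.inl hne) (Or.inl (ENNReal.natCast_ne_top _))]
  rw [← Nat.cast_mul, ← ENat.toENNReal_coe, ENat.toENNReal_le]
  exact CyclicChain.le_quasilength fun h => hM t h fun i => (ht i).2

theorem content_le {M : Type v} [AddCommGroup M] [Module R M] {r C : ℕ}
    (hM : ∀ n, 0 < n → ∃ l, l * n ≤ C * n ^ d ∧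
      CyclicChain (Ideal.span (Set.range x)) (powerIdeal x (fun _ => n) • (⊤ : Submodule R M)) ⊤
        (n ^ d * r + l)) :
    content x M ≤ r := by
  refine iSup_le fun k => ?_
  have hlim : Filter.Tendsto (fun n : ℕ => (r : ℝ≥0∞) + C / (n : ℝ≥0∞)) Filter.atTop
      (nhds (r + 0)) := by
    refine Filter.Tendsto.const_add _ ?_
    simpa only [mul_zero, div_eq_mul_inv] using
      ENNReal.Tendsto.const_mul ENNReal.tendsto_inv_nat_nhds_zero
        (Or.inr (ENNReal.natCast_ne_top C))
  rw [add_zero] at hlim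
  refine ge_of_tendsto hlim (Filter.eventually_atTop.mpr ⟨k + 1, fun n hn => ?_⟩)
  obtain ⟨l, hl, hchain⟩ := hM n (by lia)
  have hn0 : (n : ℝ≥0∞) ≠ 0 := Nat.cast_ne_zero.mpr (by lia)
  have hnt : (n : ℝ≥0∞) ≠ ⊤ := ENNReal.natCast_ne_top n
  refine iInf_le_of_le ⟨fun _ => n, fun _ => ⟨by lia, by lia⟩⟩ ?_
  change _ / ∏ _i : Fin d, (n : ℝ≥0∞) ≤ _
  rw [Fin.prod_const, ENNReal.div_le_iff (pow_ne_zero _ hn0) (ENNReal.pow_ne_top hnt)]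
  calc _ ≤ ((n ^ d * r + l : ℕ) : ℝ≥0∞) := by
        rw [← ENat.toENNReal_coe, ENat.toENNReal_le]
        exact hchain.quasilength_le
    _ ≤ r * (n : ℝ≥0∞) ^ d + C * (n : ℝ≥0∞) ^ d / n := by
        push_cast
        rw [mul_comm (r : ℝ≥0∞)]
        gcongr
        rw [ENNReal.le_div_iff_mul_le (Or.inl hn0) (Or.inl hnt)]
        exact_mod_cast hl
    _ = (r + C / n) * (n : ℝ≥0∞) ^ d := by simp only [div_eq_mul_inv]; ring

variable [IsDomain R] [IsNoetherianRing R] [IsLocalRing R]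

theorem FreeQuasilengthBound.content_eq_finrank (hbound : FreeQuasilengthBound x)
    (hd : ringKrullDim R ≤ d)
    (hx : (Ideal.span (Set.range x)).radical = IsLocalRing.maximalIdeal R)
    (M : Type v) [AddCommGroup M] [Module R M] [Module.Finite R M] :
    content x M = Module.finrank R M := by
  obtain ⟨r, hr⟩ : ∃ r, Module.finrank R M = r := ⟨_, rfl⟩
  obtain ⟨c, f, g, hc, hf, hg⟩ := exists_linearMap_pi_smul_mem_range hr
  obtain ⟨C, hC⟩ :=
    exists_chain_span_singleton_sup_powerIdeal (mem_nonZeroDivisors_of_ne_zero hc) hd hx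
  obtain ⟨s, v, hv⟩ := Module.Finite.exists_fin (R := R) (M := M)
  rw [hr]
  apply le_antisymm
  · refine content_le (C := s * C) fun n hn => ?_
    obtain ⟨l, hl, hchain⟩ := hC n hn
    refine ⟨s * l, by rw [mul_assoc, mul_assoc]; gcongr, ?_⟩
    simpa using CyclicChain.powerIdeal_smul_top_of_smul_mem_range hv hf
      (CyclicChain.powerIdeal_smul_top_pi x (fun _ => n) r) hchain
  · refine le_content fun t h ht hchain => mul_prod_le_of_frequently (C := C) ht ?_
    refine ((Filter.eventually_gt_atTop 0).mono fun n hn => ?_).frequently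
    obtain ⟨l, hl, hcl⟩ := hC n hn
    refine ⟨l, hl, ?_⟩
    simpa using hbound r (fun _ => n) _ (fun _ => hn) <|
      (hchain.scale_to_const ht n).powerIdeal_smul_top_of_smul_mem_range
        (Pi.basisFun R (Fin r)).span_eq hg hcl

theorem FreeQuasilengthBound.content_add (hbound : FreeQuasilengthBound x)
    (hd : ringKrullDim R ≤ d)
    (hx : (Ideal.span (Set.range x)).radical = IsLocalRing.maximalIdeal R)
    {L M N : Type v} [AddCommGroup L] [Module R L] [AddCommGroup M] [Module R M]
    [AddCommGroup N] [Module R N] [Module.Finite R L] [Module.Finite R M] [Module.Finite R N]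
    {f : L →ₗ[R] M} {g : M →ₗ[R] N} (hf : Function.Injective f) (hg : Function.Surjective g)
    (hfg : Function.Exact f g) :
    content x M = content x L + content x N := by
  have hN : Module.finrank R (M ⧸ LinearMap.range f) = Module.finrank R N :=
    ((Submodule.quotEquivOfEq _ _ (LinearMap.exact_iff.mp hfg).symm).trans
      (g.quotKerEquivOfSurjective hg)).finrank_eq
  have hM := Submodule.finrank_quotient_add_finrank (LinearMap.range f)
  rw [hN, LinearMap.finrank_range_of_inj hf] at hM
  simp only [hbound.content_eq_finrank hd hx, ← hM]
  push_cast
  exact add_comm _ _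

end Content

section BaseChange

variable {A S : Type*} [CommRing A] [CommRing S]

theorem CyclicChain.map_pi {I J : Ideal A} {r h : ℕ}
    (hA : CyclicChain J (I • (⊤ : Submodule A (Fin r → A))) ⊤ h) (φ : A →+* S) :
    CyclicChain (J.map φ) (I.map φ • (⊤ : Submodule S (Fin r → S))) ⊤ h := by
  let f : (Fin r → A) →ₛₗ[φ] (Fin r → S) :=
    { toFun := fun v i => φ (v i)
      map_add' := fun v w => funext fun i => map_add φ (v i) (w i)
      map_smul' := fun a v => funext fun i => map_mul φ a (v i) }
  have htop : Submodule.span S (f '' (⊤ : Submodule A (Fin r → A))) = ⊤ := by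
    refine top_le_iff.mp ((Pi.basisFun S (Fin r)).span_eq.ge.trans (Submodule.span_mono ?_))
    rintro _ ⟨i, rfl⟩
    refine ⟨Pi.single i 1, Submodule.mem_top, funext fun j => ?_⟩
    exact (Pi.apply_single (fun _ => φ) (fun _ => map_zero φ) i 1 j).trans (by simp)
  have hS := hA.span_image f
  rwa [span_image_smul, htop] at hS

theorem CyclicChain.map_powerIdeal_pi {d r h : ℕ} {x : Fin d → A} {t : Fin d → ℕ}
    (hA : CyclicChain (Ideal.span (Set.range x))
      (powerIdeal x t • (⊤ : Submodule A (Fin r → A))) ⊤ h) (φ : A →+* S) :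
    CyclicChain (Ideal.span (Set.range fun i => φ (x i)))
      (powerIdeal (fun i => φ (x i)) t • (⊤ : Submodule S (Fin r → S))) ⊤ h := by
  simpa only [map_powerIdeal, Ideal.map_span, ← Set.range_comp, Function.comp_def] using hA.map_pi φ

theorem FreeQuasilengthBound.of_map {d : ℕ} {x : Fin d → A} {φ : A →+* S}
    (hS : FreeQuasilengthBound fun i => φ (x i)) : FreeQuasilengthBound x :=
  fun r t h ht hA => hS r t h ht (hA.map_powerIdeal_pi φ)

theorem mul_length_quotient_le_length_pi_quotient [Algebra A S] (J : Ideal S) (r : ℕ) :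
    r * Module.length A (S ⧸ J) ≤
      Module.length A ((Fin r → S) ⧸ (J • (⊤ : Submodule S (Fin r → S)))) := by
  let g : (Fin r → S) →ₗ[S] (Fin r → S ⧸ J) := LinearMap.pi fun i => J.mkQ ∘ₗ LinearMap.proj i
  have hg : J • (⊤ : Submodule S (Fin r → S)) ≤ LinearMap.ker g :=
    Submodule.smul_le.mpr fun a ha v _ => funext fun _ =>
      Ideal.Quotient.eq_zero_iff_mem.mpr (Ideal.mul_mem_right _ _ ha)
  have hsurj : Function.Surjective (((J • ⊤ : Submodule S _).liftQ g hg).restrictScalars A) := by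
    intro z
    choose w hw using fun i => Ideal.Quotient.mk_surjective (z i)
    exact ⟨Submodule.Quotient.mk w, funext hw⟩
  simpa [Module.length_pi] using Module.length_le_of_surjective _ hsurj

end BaseChange

section Growth

/-- `f` grows at least like a positive multiple of `n ^ d`. It is applied to the lengths of the
quotients of a module by the powers of the maximal ideal, where it replaces Hilbert–Samuel
polynomials. -/
def GrowsAtLeastPow (d : ℕ) (f : ℕ → ℕ∞) : Prop :=
  ∃ D : ℕ, ∀ᶠ n : ℕ in Filter.atTop, ((n ^ d : ℕ) : ℕ∞) ≤ D * f n

namespace GrowsAtLeastPow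

variable {d : ℕ} {f g : ℕ → ℕ∞}

theorem of_le_add (hf : GrowsAtLeastPow d f) (k : ℕ) (hfg : ∀ n, f n ≤ g (n + k)) :
    GrowsAtLeastPow d g := by
  obtain ⟨D, hD⟩ := hf
  obtain ⟨n₀, hn₀⟩ := Filter.eventually_atTop.mp hD
  refine ⟨2 ^ d * D, Filter.eventually_atTop.mpr ⟨n₀ + 2 * k, fun n hn => ?_⟩⟩
  obtain ⟨j, rfl⟩ := Nat.exists_eq_add_of_le' (show k ≤ n by lia)
  calc (((j + k) ^ d : ℕ) : ℕ∞) ≤ (((2 * j) ^ d : ℕ) : ℕ∞) := by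
        exact_mod_cast Nat.pow_le_pow_left (by lia) d
    _ = (2 ^ d : ℕ) * ((j ^ d : ℕ) : ℕ∞) := by rw [mul_pow]; push_cast; rfl
    _ ≤ (2 ^ d : ℕ) * (D * g (j + k)) := by
        gcongr
        exact (hn₀ j (by lia)).trans (by gcongr; exact hfg j)
    _ = _ := by push_cast; ring

theorem mono (hf : GrowsAtLeastPow d f) (hfg : ∀ n, f n ≤ g n) : GrowsAtLeastPow d g :=
  hf.of_le_add 0 hfg

theorem succ (hg : GrowsAtLeastPow d g) (hf : Monotone f) {K : ℕ} (hK : 0 < K)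
    (hfg : ∀ n, f n + g (n + K) ≤ f (n + K)) : GrowsAtLeastPow (d + 1) f := by
  obtain ⟨D, hD⟩ := hg
  obtain ⟨n₀, hn₀⟩ := Filter.eventually_atTop.mp hD
  have hsum : ∀ q, n₀ ≤ q * K → ∀ j, ((j * (q * K) ^ d : ℕ) : ℕ∞) ≤ D * f (q * K + j * K) := by
    intro q hq j
    induction j with
    | zero => simp
    | succ j ih =>
      have hle : q * K ≤ q * K + j * K + K := by lia
      calc (((j + 1) * (q * K) ^ d : ℕ) : ℕ∞)
          = ((j * (q * K) ^ d : ℕ) : ℕ∞) + (((q * K) ^ d : ℕ) : ℕ∞) := by push_cast; ring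
        _ ≤ D * f (q * K + j * K) + D * g (q * K + j * K + K) := by
            refine add_le_add ih (le_trans ?_ (hn₀ _ (hq.trans hle)))
            exact_mod_cast Nat.pow_le_pow_left hle d
        _ ≤ D * f (q * K + j * K + K) := by rw [← mul_add]; gcongr; exact hfg _
        _ = _ := by congr 2; ring
  refine ⟨(4 * K) ^ (d + 1) * D, Filter.eventually_atTop.mpr ⟨2 * K * (n₀ + 1), fun n hn => ?_⟩⟩
  obtain ⟨q, hq⟩ : ∃ q, q = n / (2 * K) := ⟨_, rfl⟩
  have hq₀ : n₀ + 1 ≤ q := by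
    rw [hq, Nat.le_div_iff_mul_le (by lia)]
    linarith
  have hlt : n < 2 * K * (q + 1) := hq ▸ Nat.lt_mul_div_succ n (by lia)
  have hle : q * K + q * K ≤ n := by linarith [hq ▸ Nat.mul_div_le n (2 * K)]
  have hpow : n ^ (d + 1) ≤ (4 * K) ^ (d + 1) * (q * (q * K) ^ d) :=
    calc n ^ (d + 1) ≤ (4 * K * q) ^ (d + 1) := Nat.pow_le_pow_left (by nlinarith) _
      _ = (4 * K) ^ (d + 1) * (q * q ^ d) := by ring
      _ ≤ _ := by gcongr; exact Nat.le_mul_of_pos_right q hK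
  calc ((n ^ (d + 1) : ℕ) : ℕ∞) ≤ ((4 * K) ^ (d + 1) : ℕ) * ((q * (q * K) ^ d : ℕ) : ℕ∞) := by
        exact_mod_cast hpow
    _ ≤ ((4 * K) ^ (d + 1) : ℕ) * (D * f n) := by
        gcongr
        exact (hsum q (by nlinarith) q).trans (by gcongr; exact hf hle)
    _ = _ := by push_cast; ring

end GrowsAtLeastPow

end Growth

section Frobenius

theorem le_of_eventually_pow_le_mul_pow {a b D : ℕ}
    (h : ∀ᶠ k : ℕ in Filter.atTop, a ^ k ≤ D * b ^ k) : a ≤ b := by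
  by_contra! hab
  rcases Nat.eq_zero_or_pos b with rfl | hb
  · obtain ⟨k, hk, hk0⟩ := (h.and (Filter.eventually_gt_atTop 0)).exists
    rw [zero_pow hk0.ne', mul_zero] at hk
    exact (pow_pos hab k).not_ge hk
  · have hgt : (1 : ℝ) < a / b := (one_lt_div (by exact_mod_cast hb)).mpr (by exact_mod_cast hab)
    obtain ⟨k, hDk, hk⟩ :=
      (((tendsto_pow_atTop_atTop_of_one_lt hgt).eventually_gt_atTop (D : ℝ)).and h).exists
    rw [div_pow, lt_div_iff₀ (by positivity)] at hDk
    exact hDk.not_ge (by exact_mod_cast hk)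

variable {A S : Type*} [CommRing A] [CommRing S] [Algebra A S] (p : ℕ) [Fact p.Prime] [CharP S p]
  {d r h : ℕ} {x : Fin d → S}

include p in
theorem CyclicChain.mul_length_quotient_powerIdeal_le {e : ℕ}
    (hchain : CyclicChain (Ideal.span (Set.range x))
      (powerIdeal x (fun _ => p ^ e) • (⊤ : Submodule S (Fin r → S))) ⊤ h) (e' : ℕ) :
    r * Module.length A (S ⧸ powerIdeal x fun _ => p ^ (e' + e)) ≤
      h * Module.length A (S ⧸ powerIdeal x fun _ => p ^ e') := by
  have hfrob := hchain.map_powerIdeal_pi (iterateFrobenius S p e')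
  simp only [powerIdeal, iterateFrobenius_def, ← pow_mul, ← pow_add] at hfrob
  exact (mul_length_quotient_le_length_pi_quotient _ r).trans hfrob.length_quotient_le

include p in
theorem CyclicChain.pow_mul_length_quotient_powerIdeal_le {e : ℕ}
    (hchain : CyclicChain (Ideal.span (Set.range x))
      (powerIdeal x (fun _ => p ^ e) • (⊤ : Submodule S (Fin r → S))) ⊤ h) (k : ℕ) :
    (r ^ k : ℕ) * Module.length A (S ⧸ powerIdeal x fun _ => p ^ (k * e)) ≤
      (h ^ k : ℕ) * Module.length A (S ⧸ Ideal.span (Set.range x)) := by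
  induction k with
  | zero =>
    have hone : powerIdeal x (fun _ => p ^ (0 * e)) = Ideal.span (Set.range x) := by
      rw [zero_mul, pow_zero, powerIdeal_one]
    rw [hone, pow_zero, pow_zero]
  | succ k ih =>
    calc ((r ^ (k + 1) : ℕ) : ℕ∞) * Module.length A (S ⧸ powerIdeal x fun _ => p ^ ((k + 1) * e))
        = (r ^ k : ℕ) * (r * Module.length A (S ⧸ powerIdeal x fun _ => p ^ (k * e + e))) := by
          rw [add_mul, one_mul, pow_succ]; push_cast; ring
      _ ≤ (r ^ k : ℕ) * (h * Module.length A (S ⧸ powerIdeal x fun _ => p ^ (k * e))) := by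
          gcongr _ * ?_
          exact hchain.mul_length_quotient_powerIdeal_le p _
      _ = h * ((r ^ k : ℕ) * Module.length A (S ⧸ powerIdeal x fun _ => p ^ (k * e))) := by ring
      _ ≤ h * ((h ^ k : ℕ) * Module.length A (S ⧸ Ideal.span (Set.range x))) := by gcongr
      _ = _ := by push_cast; ring

include p in
theorem CyclicChain.mul_pow_le_of_growsAtLeastPow
    (hfin : Module.length A (S ⧸ Ideal.span (Set.range x)) ≠ ⊤)
    (hgrow : GrowsAtLeastPow d fun n => Module.length A (S ⧸ powerIdeal x fun _ => n)) {e : ℕ}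
    (he : 0 < e) (hchain : CyclicChain (Ideal.span (Set.range x))
      (powerIdeal x (fun _ => p ^ e) • (⊤ : Submodule S (Fin r → S))) ⊤ h) :
    r * (p ^ e) ^ d ≤ h := by
  obtain ⟨L, hL⟩ := ENat.ne_top_iff_exists.mp hfin
  obtain ⟨D, hD⟩ := hgrow
  have htends : Filter.Tendsto (fun k => p ^ (k * e)) Filter.atTop Filter.atTop :=
    (tendsto_pow_atTop_atTop_of_one_lt (Fact.out : p.Prime).one_lt).comp
      (Filter.tendsto_id.atTop_mul_const' he)
  refine le_of_eventually_pow_le_mul_pow (D := D * L) ((htends.eventually hD).mono fun k hk => ?_)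
  have hle : ((r ^ k * (p ^ (k * e)) ^ d : ℕ) : ℕ∞) ≤ (D * (h ^ k * L) : ℕ) :=
    calc ((r ^ k * (p ^ (k * e)) ^ d : ℕ) : ℕ∞)
        = (r ^ k : ℕ) * (((p ^ (k * e)) ^ d : ℕ) : ℕ∞) := by push_cast; rfl
      _ ≤ (r ^ k : ℕ) * (D * Module.length A (S ⧸ powerIdeal x fun _ => p ^ (k * e))) := by
          gcongr
      _ = D * ((r ^ k : ℕ) * Module.length A (S ⧸ powerIdeal x fun _ => p ^ (k * e))) := by ring
      _ ≤ D * ((h ^ k : ℕ) * L) := by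
          gcongr _ * ?_
          exact hL ▸ hchain.pow_mul_length_quotient_powerIdeal_le p k
      _ = _ := by push_cast; rfl
  calc (r * (p ^ e) ^ d) ^ k = r ^ k * (p ^ (k * e)) ^ d := by ring
    _ ≤ D * (h ^ k * L) := by exact_mod_cast hle
    _ = D * L * h ^ k := by ring

include p in
theorem FreeQuasilengthBound.of_charP
    (hfin : Module.length A (S ⧸ Ideal.span (Set.range x)) ≠ ⊤)
    (hgrow : GrowsAtLeastPow d fun n => Module.length A (S ⧸ powerIdeal x fun _ => n)) :
    FreeQuasilengthBound x := by
  refine fun r t h ht hchain => mul_prod_le_of_frequently (C := 0) ht ?_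
  have hp := (Fact.out : p.Prime).one_lt
  refine Filter.frequently_atTop.mpr fun n₀ => ⟨p ^ (n₀ + 1), ?_, 0, by simp, ?_⟩
  · exact n₀.le_succ.trans (Nat.lt_pow_self hp).le
  · exact CyclicChain.mul_pow_le_of_growsAtLeastPow p hfin hgrow n₀.succ_pos
      (hchain.scale_to_const ht _)

end Frobenius

section HilbertSamuelGrowth

theorem exists_forall_smul_mem_pow_smul_top {A N : Type*} [CommRing A] [IsNoetherianRing A]
    [AddCommGroup N] [Module A N] [Module.Finite A N] (I : Ideal A) (v : N) :
    ∃ k, ∀ n, ∀ a : A, a • v ∈ I ^ (n + k) • (⊤ : Submodule A N) →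
      a ∈ (Submodule.span A {v}).annihilator ⊔ I ^ n := by
  obtain ⟨k, hk⟩ := I.exists_pow_inf_eq_pow_smul (Submodule.span A {v})
  refine ⟨k, fun n a ha => ?_⟩
  have hmem : a • v ∈ I ^ (n + k) • ⊤ ⊓ Submodule.span A {v} :=
    ⟨ha, Submodule.smul_mem _ _ (Submodule.mem_span_singleton_self v)⟩
  rw [hk (n + k) (Nat.le_add_left k n), Nat.add_sub_cancel] at hmem
  obtain ⟨b, hb, hbv⟩ := Submodule.mem_smul_span_singleton.mp
    (Submodule.smul_mono le_rfl inf_le_right hmem)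
  refine Submodule.mem_sup.mpr ⟨a - b, ?_, b, hb, sub_add_cancel a b⟩
  rw [Submodule.mem_annihilator_span_singleton, sub_smul, hbv, sub_self]

theorem exists_forall_mul_mem_sup_pow {A : Type*} [CommRing A] [IsNoetherianRing A] (I : Ideal A)
    {P : Ideal A} [hP : P.IsPrime] {a : A} (ha : a ∉ P) :
    ∃ k, ∀ n b, b * a ∈ P ⊔ I ^ (n + (k + 1)) → b ∈ P ⊔ I ^ n := by
  obtain ⟨k, hk⟩ := exists_forall_smul_mem_pow_smul_top I (Ideal.Quotient.mk P a)
  have hann : (Submodule.span A {Ideal.Quotient.mk P a}).annihilator ≤ P := fun c hc => by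
    rw [Submodule.mem_annihilator_span_singleton] at hc
    exact (hP.mem_or_mem (Ideal.Quotient.eq_zero_iff_mem.mp hc)).resolve_right ha
  refine ⟨k, fun n b hb => sup_le_sup_right hann _ (hk n b ?_)⟩
  obtain ⟨u, hu, w, hw, huw⟩ := Submodule.mem_sup.mp hb
  have hmk : b • Ideal.Quotient.mk P a = w • (1 : A ⧸ P) := by
    simp only [Algebra.smul_def, Ideal.Quotient.algebraMap_eq, mul_one, ← map_mul, ← huw, map_add,
      Ideal.Quotient.eq_zero_iff_mem.mpr hu, zero_add]
  rw [hmk]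
  exact Submodule.smul_mem_smul (Ideal.pow_le_pow_right (by lia) hw) Submodule.mem_top

theorem length_quotient_add_length_quotient_le {A N : Type*} [CommRing A] [AddCommGroup N]
    [Module A N] {J : Ideal A} {Q : Submodule A N} {v : N} (hv : ∀ a : A, a • v ∈ Q → a ∈ J) :
    Module.length A (A ⧸ J) + Module.length A (N ⧸ (Q ⊔ Submodule.span A {v})) ≤
      Module.length A (N ⧸ Q) := by
  let f : A →ₗ[A] N ⧸ Q := Q.mkQ ∘ₗ LinearMap.toSpanSingleton A N v
  have hker : LinearMap.ker f ≤ J := fun a ha => hv a ((Submodule.Quotient.mk_eq_zero Q).mp ha)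
  have hQ : Q ≤ Q ⊔ Submodule.span A {v} := le_sup_left
  have hrange : LinearMap.range f ≤ LinearMap.ker (Submodule.factor hQ) := by
    rintro _ ⟨a, rfl⟩
    exact (Submodule.Quotient.mk_eq_zero (Q ⊔ Submodule.span A {v})).mpr (Submodule.mem_sup_right
      (Submodule.smul_mem _ a (Submodule.mem_span_singleton_self v)))
  rw [Module.length_eq_add_of_exact (LinearMap.range f).subtype (LinearMap.range f).mkQ
    (Submodule.subtype_injective _) (Submodule.mkQ_surjective _) (LinearMap.exact_subtype_mkQ _)]
  gcongr
  · rw [← f.quotKerEquivRange.length_eq]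
    exact Module.length_le_of_surjective _ (Submodule.factor_surjective hker)
  · refine Module.length_le_of_surjective ((LinearMap.range f).liftQ _ hrange) fun z => ?_
    obtain ⟨y, rfl⟩ := Submodule.factor_surjective hQ z
    exact ⟨Submodule.Quotient.mk y, rfl⟩

variable {A : Type*} [CommRing A] [IsLocalRing A] [IsNoetherianRing A]

open IsLocalRing

theorem growsAtLeastPow_length_quotient_prime_sup (d : ℕ) (P : PrimeSpectrum A)
    (hd : d ≤ Order.coheight P) :
    GrowsAtLeastPow d fun n => Module.length A (A ⧸ (P.asIdeal ⊔ maximalIdeal A ^ n)) := by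
  induction d generalizing P with
  | zero =>
    refine ⟨1, Filter.eventually_atTop.mpr ⟨1, fun n hn => ?_⟩⟩
    have hne : P.asIdeal ⊔ maximalIdeal A ^ n ≠ ⊤ := ne_top_of_le_ne_top
      (maximalIdeal.isMaximal A).ne_top (sup_le (le_maximalIdeal P.isPrime.ne_top)
        (Ideal.pow_le_self (by lia)))
    have : Nontrivial (A ⧸ (P.asIdeal ⊔ maximalIdeal A ^ n)) :=
      Ideal.Quotient.nontrivial_iff.mpr hne
    simpa using Order.one_le_iff_pos.mpr (Module.length_pos (R := A))
  | succ d ih =>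
    obtain ⟨l, rfl, hl⟩ := Order.exists_series_of_le_coheight P hd
    let P' := l ⟨1, by lia⟩
    have hlt : l.head < P' := l.strictMono (by simp [Fin.lt_def])
    have hP' : d ≤ Order.coheight P' := by
      simpa [Fin.val_rev, hl] using Order.rev_index_le_coheight l ⟨1, by lia⟩
    obtain ⟨a, haP', haP⟩ := SetLike.exists_of_lt (show l.head.asIdeal < P'.asIdeal from hlt)
    obtain ⟨k, hk⟩ := exists_forall_mul_mem_sup_pow (maximalIdeal A) haP
    refine (ih P' hP').succ ?_ k.succ_pos fun n => ?_
    · exact fun n n' hn => Module.length_le_of_surjective _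
        (Submodule.factor_surjective (sup_le_sup_left (Ideal.pow_le_pow_right hn) _))
    · refine le_trans ?_ (length_quotient_add_length_quotient_le (hk n))
      gcongr
      refine Module.length_le_of_surjective _ (Submodule.factor_surjective
        (sup_le (sup_le_sup_right hlt.le _) ?_))
      exact (Ideal.span_singleton_le_iff_mem _).mpr (Ideal.mem_sup_left haP')

theorem growsAtLeastPow_length_quotient_maximalIdeal_pow {d : ℕ} (hd : d ≤ ringKrullDim A) :
    GrowsAtLeastPow d fun n => Module.length A (A ⧸ maximalIdeal A ^ n) := by
  obtain ⟨l, rfl⟩ := Order.le_krullDim_iff.mp hd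
  exact (growsAtLeastPow_length_quotient_prime_sup _ l.head (Order.length_le_coheight le_rfl)).mono
    fun n => Module.length_le_of_surjective _ (Submodule.factor_surjective le_sup_right)

theorem growsAtLeastPow_length_quotient_maximalIdeal_pow_smul {d : ℕ} (hd : d ≤ ringKrullDim A)
    {N : Type*} [AddCommGroup N] [Module A N] [Module.Finite A N] {v : N}
    (hv : ∀ a : A, a • v = 0 → a = 0) :
    GrowsAtLeastPow d fun n =>
      Module.length A (N ⧸ (maximalIdeal A ^ n • (⊤ : Submodule A N))) := by
  obtain ⟨k, hk⟩ := exists_forall_smul_mem_pow_smul_top (maximalIdeal A) v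
  have hann : (Submodule.span A {v}).annihilator = ⊥ := (Submodule.eq_bot_iff _).mpr fun a ha =>
    hv a ((Submodule.mem_annihilator_span_singleton v a).mp ha)
  simp only [hann, bot_sup_eq] at hk
  exact (growsAtLeastPow_length_quotient_maximalIdeal_pow hd).of_le_add k fun n =>
    le_self_add.trans (length_quotient_add_length_quotient_le (hk n))

variable {d : ℕ} {x : Fin d → A}

theorem powerIdeal_const_le_pow {S : Type*} [CommRing S] {x : Fin d → S} {I : Ideal S}
    (hx : Ideal.span (Set.range x) ≤ I) (n : ℕ) : powerIdeal x (fun _ => n) ≤ I ^ n :=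
  Ideal.span_le.mpr <| Set.range_subset_iff.mpr fun i =>
    Ideal.pow_mem_pow (hx (Ideal.subset_span ⟨i, rfl⟩)) n

theorem length_quotient_ne_top_of_radical_eq {I : Ideal A} (hI : I.radical = maximalIdeal A) :
    Module.length A (A ⧸ I) ≠ ⊤ := by
  obtain ⟨N, hN⟩ := Ideal.exists_pow_le_of_le_radical_of_fg hI.ge (IsNoetherian.noetherian _)
  obtain ⟨h, hh⟩ := CyclicChain.exists_pow (maximalIdeal A) N
  have hle := (hh.top_of_le hN).length_quotient_le (A := A)
  have hsimple : IsSimpleModule A (A ⧸ maximalIdeal A) :=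
    isSimpleModule_iff_quot_maximal.mpr ⟨_, maximalIdeal.isMaximal A, ⟨LinearEquiv.refl _ _⟩⟩
  rw [Module.length_eq_one A (A ⧸ maximalIdeal A), mul_one] at hle
  exact ne_top_of_le_ne_top (ENat.natCast_ne_top h) hle

theorem length_quotient_smul_top_ne_top_of_radical_eq {I : Ideal A}
    (hI : I.radical = maximalIdeal A) (N : Type*) [AddCommGroup N] [Module A N]
    [Module.Finite A N] : Module.length A (N ⧸ (I • (⊤ : Submodule A N))) ≠ ⊤ := by
  obtain ⟨s, v, hv⟩ := Module.Finite.exists_fin (R := A) (M := N)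
  have hchain : CyclicChain I (I • (⊤ : Submodule A N)) ⊤ (Fintype.card (Fin s)) :=
    .of_span_range_eq_top v hv fun i a ha => Submodule.smul_mem_smul ha Submodule.mem_top
  exact ne_top_of_le_ne_top (WithTop.mul_ne_top (ENat.natCast_ne_top _)
    (length_quotient_ne_top_of_radical_eq hI)) (hchain.length_quotient_le (A := A))

theorem length_quotient_map_eq {A B : Type*} [CommRing A] [CommRing B] [Algebra A B]
    (I : Ideal A) :
    Module.length A (B ⧸ I.map (algebraMap A B)) =
      Module.length A (B ⧸ (I • (⊤ : Submodule A B))) := by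
  rw [Ideal.smul_top_eq_map]
  exact (Submodule.Quotient.restrictScalarsEquiv A (I.map (algebraMap A B))).length_eq.symm

theorem FreeQuasilengthBound.of_finite_of_charP (hd : d ≤ ringKrullDim A)
    (hx : (Ideal.span (Set.range x)).radical = maximalIdeal A) {B : Type*} [CommRing B]
    [Algebra A B] [Module.Finite A B] (hinj : Function.Injective (algebraMap A B)) (p : ℕ)
    [Fact p.Prime] [CharP B p] : FreeQuasilengthBound fun i => algebraMap A B (x i) := by
  have hspan : Ideal.span (Set.range fun i => algebraMap A B (x i)) =
      (Ideal.span (Set.range x)).map (algebraMap A B) := by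
    rw [Ideal.map_span, ← Set.range_comp, Function.comp_def]
  have hgrow := growsAtLeastPow_length_quotient_maximalIdeal_pow_smul hd (v := (1 : B))
    fun a ha => (map_eq_zero_iff _ hinj).mp (by rwa [Algebra.algebraMap_eq_smul_one])
  refine .of_charP (A := A) p ?_ (hgrow.mono fun n => ?_)
  · rw [hspan, length_quotient_map_eq]
    exact length_quotient_smul_top_ne_top_of_radical_eq hx B
  · rw [← map_powerIdeal, length_quotient_map_eq]
    exact Module.length_le_of_surjective _ (Submodule.factor_surjective
      (Submodule.smul_mono_left (powerIdeal_const_le_pow (Ideal.le_radical.trans hx.le) n)))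

end HilbertSamuelGrowth

section MvPowerSeriesAdic

variable {σ : Type*} [Finite σ]

theorem mem_span_range_X_pow_of_truncTotal_eq_zero {K : Type*} [CommRing K] {f : MvPowerSeries σ K}
    {n : ℕ} (hf : f.truncTotal n = 0) :
    f ∈ Ideal.span (Set.range (MvPowerSeries.X : σ → MvPowerSeries σ K)) ^ n := by
  let I := MvPolynomial.idealOfVars σ K
  let e := (MvPowerSeries.toAdicCompletionAlgEquiv σ K).toLinearEquiv
  have he : e f ∈ I ^ n • (⊤ : Submodule (MvPolynomial σ K) (AdicCompletion I _)) := by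
    rw [AdicCompletion.pow_smul_top_eq_ker_eval (MvPolynomial.idealOfVars_fg σ K),
      LinearMap.mem_ker, AdicCompletion.eval_apply]
    have heval : (e f).val n = _ := MvPowerSeries.toAdicCompletion_apply_eq_mk_truncTotal
    rw [heval, hf]
    rfl
  have hf' : f ∈ I ^ n • (⊤ : Submodule (MvPolynomial σ K) (MvPowerSeries σ K)) := by
    have := Submodule.mem_map_of_mem (f := e.symm.toLinearMap) he
    rw [Submodule.map_smul'', LinearEquiv.coe_coe, e.symm_apply_apply] at this
    exact Submodule.smul_mono le_rfl le_top this
  rw [Ideal.smul_top_eq_map, Submodule.restrictScalars_mem, Ideal.map_pow] at hf'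
  have hI : I.map (algebraMap _ (MvPowerSeries σ K)) = Ideal.span (Set.range MvPowerSeries.X) := by
    rw [show I = Ideal.span (Set.range MvPolynomial.X) from rfl, Ideal.map_span, ← Set.range_comp]
    congr 2
    ext1 i
    simp [MvPowerSeries.algebraMap_apply']
  rwa [hI] at hf'

theorem maximalIdeal_mvPowerSeries_eq_span_range_X (K : Type*) [Field K] :
    IsLocalRing.maximalIdeal (MvPowerSeries σ K) = Ideal.span (Set.range MvPowerSeries.X) := by
  refine le_antisymm (fun f hf => ?_) (Ideal.span_le.mpr ?_)
  · rw [← pow_one (Ideal.span _)]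
    refine mem_span_range_X_pow_of_truncTotal_eq_zero ?_
    have hf0 : MvPowerSeries.constantCoeff f = 0 := by
      rwa [IsLocalRing.mem_maximalIdeal, mem_nonunits_iff, MvPowerSeries.isUnit_iff_constantCoeff,
        isUnit_iff_ne_zero, not_not] at hf
    ext m
    rcases eq_or_ne m 0 with rfl | hm
    · rw [MvPowerSeries.coeff_truncTotal _ (by simp)]
      simpa using hf0
    · rw [MvPowerSeries.coeff_truncTotal_eq_zero, MvPolynomial.coeff_zero]
      exact Nat.one_le_iff_ne_zero.mpr ((Finsupp.degree_eq_zero_iff m).not.mpr hm)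
  · rintro _ ⟨i, rfl⟩
    rw [SetLike.mem_coe, IsLocalRing.mem_maximalIdeal, mem_nonunits_iff,
      MvPowerSeries.isUnit_iff_constantCoeff]
    simp

theorem exists_mvPowerSeries_ringHom {K S : Type*} [CommRing K] [CommRing S] (J : Ideal S)
    [IsAdicComplete J S] (c : K →+* S) {x : σ → S} (hx : ∀ i, x i ∈ J) :
    ∃ φ : MvPowerSeries σ K →+* S,
      (∀ k, φ (MvPowerSeries.C k) = c k) ∧ ∀ i, φ (MvPowerSeries.X i) = x i := by
  let I := MvPolynomial.idealOfVars σ K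
  let g : MvPolynomial σ K →+* S := MvPolynomial.eval₂Hom c x
  have hg n : I ^ n ≤ (J ^ n).comap g := by
    rw [← Ideal.map_le_iff_le_comap, Ideal.map_pow]
    refine Ideal.pow_right_mono ?_ n
    rw [show I = Ideal.span (Set.range MvPolynomial.X) from rfl, Ideal.map_span, Ideal.span_le]
    rintro _ ⟨_, ⟨i, rfl⟩, rfl⟩
    simpa [g] using hx i
  let f n : MvPowerSeries σ K →+* S ⧸ J ^ n :=
    (Ideal.quotientMap (J ^ n) g (hg n)).comp (MvPowerSeries.truncTotalAlgHom σ K n)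
  have hf_apply n a : f n a = Ideal.Quotient.mk _ (g (MvPowerSeries.truncTotal n a)) := rfl
  have hf : ∀ {m n : ℕ} (hle : m ≤ n), (Ideal.Quotient.factorPow J hle).comp (f n) = f m := by
    intro m n hle
    ext a
    rw [RingHom.comp_apply, hf_apply, hf_apply]
    change Ideal.Quotient.mk _ _ = _
    rw [Ideal.Quotient.eq, ← map_sub]
    exact hg m (MvPowerSeries.truncTotal_sub_truncTotal_mem_pow_idealOfVars hle le_rfl a)
  have hpoly (P : MvPolynomial σ K) :
      IsAdicComplete.liftRingHom J f hf (P : MvPowerSeries σ K) = g P := by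
    rw [← sub_eq_zero]
    refine IsHausdorff.haus (I := J) inferInstance _ fun n => ?_
    rw [SModEq.zero, smul_eq_mul, Ideal.mul_top, ← Ideal.Quotient.eq_zero_iff_mem, map_sub,
      IsAdicComplete.mk_liftRingHom, hf_apply, sub_eq_zero, Ideal.Quotient.eq, ← map_sub]
    refine hg n ((MvPolynomial.mem_pow_idealOfVars_iff' ..).mpr fun m hm => ?_)
    simp [MvPowerSeries.coeff_truncTotal _ hm]
  refine ⟨IsAdicComplete.liftRingHom J f hf, fun k => ?_, fun i => ?_⟩
  · rw [← MvPolynomial.coe_C, hpoly]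
    simp [g]
  · rw [← MvPolynomial.coe_X, hpoly]
    simp [g]

end MvPowerSeriesAdic

section Newton

variable {B : Type*} [CommRing B] (I : Ideal B) [IsAdicComplete I B]

theorem exists_isFixedPt_of_adic_contraction {T : B → B} (hTI : ∀ a ∈ I, T a ∈ I)
    (hT : ∀ n, ∀ a ∈ I, ∀ b ∈ I, a - b ∈ I ^ n → T a - T b ∈ I ^ (n + 1)) :
    ∃ z ∈ I, Function.IsFixedPt T z := by
  have hiter_succ n : T^[n + 1] 0 = T (T^[n] 0) := Function.iterate_succ_apply' T n 0
  have hiter_mem n : T^[n] 0 ∈ I := by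
    induction n with
    | zero => exact I.zero_mem
    | succ n ih => exact hiter_succ n ▸ hTI _ ih
  have hstep n : T^[n + 1] 0 - T^[n] 0 ∈ I ^ n := by
    induction n with
    | zero => simp
    | succ n ih =>
      rw [hiter_succ (n + 1), hiter_succ n]
      exact hT n _ (hiter_succ n ▸ hiter_mem (n + 1)) _ (hiter_mem n) (hiter_succ n ▸ ih)
  have hcauchy {m n : ℕ} (hmn : m ≤ n) : T^[m] 0 ≡ T^[n] 0 [SMOD (I ^ m • ⊤ : Submodule B B)] := by
    refine SModEq.symm ?_
    rw [SModEq.sub_mem, smul_eq_mul, Ideal.mul_top]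
    induction n, hmn using Nat.le_induction with
    | base => simp
    | succ n hmn ih => simpa using add_mem (Ideal.pow_le_pow_right hmn (hstep n)) ih
  obtain ⟨z, hz⟩ := IsPrecomplete.prec (I := I) (M := B) inferInstance hcauchy
  have hlim n : T^[n] 0 - z ∈ I ^ n := by
    simpa only [SModEq.sub_mem, smul_eq_mul, Ideal.mul_top] using hz n
  have hzI : z ∈ I := by
    have hlim_one := hlim 1
    rw [pow_one] at hlim_one
    exact (Submodule.sub_mem_iff_right I (hiter_mem 1)).mp hlim_one
  refine ⟨z, hzI, sub_eq_zero.mp <| IsHausdorff.haus (I := I) inferInstance _ fun n => ?_⟩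
  rw [SModEq.zero, smul_eq_mul, Ideal.mul_top]
  have hsub := sub_mem (hlim (n + 1)) (hiter_succ n ▸ hT n _ (hiter_mem n) _ hzI (hlim n))
  exact Ideal.pow_le_pow_right n.le_succ (by simpa using hsub)

theorem exists_mem_add_add_sq_mul_eval_eq_zero {κ : B} (hκ : κ ∈ I) (k : Polynomial B) :
    ∃ z ∈ I, κ + z + z ^ 2 * k.eval z = 0 := by
  obtain ⟨z, hz, hfix⟩ := exists_isFixedPt_of_adic_contraction I
    (T := fun z => -κ - z ^ 2 * k.eval z)
    (fun a ha => sub_mem (I.neg_mem hκ) (I.mul_mem_right _ (I.pow_mem_of_mem ha 2 two_pos)))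
    fun n a ha b hb hab => by
      obtain ⟨c, hc⟩ := Polynomial.sub_dvd_eval_sub a b k
      have hfactor : -κ - a ^ 2 * k.eval a - (-κ - b ^ 2 * k.eval b) =
          (a - b) * (-(a + b) * k.eval a - b ^ 2 * c) := by
        linear_combination -b ^ 2 * hc
      rw [hfactor, pow_succ]
      exact Ideal.mul_mem_mul hab (sub_mem (I.mul_mem_right _ (I.neg_mem (I.add_mem ha hb)))
        (I.mul_mem_right _ (I.pow_mem_of_mem hb 2 two_pos)))
  refine ⟨z, hz, ?_⟩
  linear_combination -hfix.eq

theorem exists_eval_add_mul_eq (G : Polynomial B) (w : B) :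
    ∃ k : Polynomial B, ∀ z, G.eval (w + G.derivative.eval w * z) =
      G.eval w + G.derivative.eval w ^ 2 * (z + z ^ 2 * k.eval z) := by
  set a := G.derivative.eval w with ha
  obtain ⟨k, hk⟩ := (G.map Polynomial.C).binomExpansion (Polynomial.C w)
    (Polynomial.C a * Polynomial.X)
  refine ⟨k, fun z => ?_⟩
  have heval_map (q r : Polynomial B) : (q.map Polynomial.C).eval r = q.comp r :=
    Polynomial.eval_map ..
  have hz := congrArg (Polynomial.eval z) hk
  simp only [Polynomial.derivative_map, heval_map, Polynomial.comp_C, Polynomial.eval_comp,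
    Polynomial.eval_add, Polynomial.eval_mul, Polynomial.eval_pow, Polynomial.eval_C,
    Polynomial.eval_X, ← ha] at hz
  linear_combination hz

theorem exists_eval_eq_zero_of_eval_eq (G : Polynomial B) {w T δ c : B} (hT : T ∈ I)
    (h : G.eval w = T * (G.derivative.eval w ^ 2 * δ) * c) :
    ∃ z, G.eval (w + G.derivative.eval w * (T * δ * z)) = 0 := by
  obtain ⟨k, hk⟩ := exists_eval_add_mul_eq G w
  obtain ⟨z, hz, hz0⟩ := exists_mem_add_add_sq_mul_eval_eq_zero I
    (κ := T * δ * c) (I.mul_mem_right _ (I.mul_mem_right _ hT)) k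
  obtain ⟨u, hu⟩ : IsUnit (1 + z * k.eval z) := by
    rw [add_comm]
    exact Ideal.mem_jacobson_bot.mp (IsAdicComplete.le_jacobson_bot I hz) (k.eval z)
  have hz_eq : T * δ * (-c * ↑u⁻¹) = z := by
    rw [← mul_assoc, Units.mul_inv_eq_iff_eq_mul, hu]
    linear_combination -hz0
  refine ⟨-c * ↑u⁻¹, ?_⟩
  rw [hz_eq, hk, h]
  linear_combination G.derivative.eval w ^ 2 * hz0

end Newton

section PrimitiveElement

variable {Λ E : Type*} [CommRing Λ] [IsDomain Λ] [CommRing E] [IsDomain E] [Algebra Λ E]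
  [FaithfulSMul Λ E] (k L : Type*) [Field k] [Field L] [Algebra Λ k] [IsFractionRing Λ k]
  [Algebra E L] [IsFractionRing E L] [Algebra Λ L] [Algebra k L] [IsScalarTower Λ k L]
  [IsScalarTower Λ E L] [Algebra.IsAlgebraic Λ E]

include k in
theorem exists_isIntegral_algebraMap_eq_algebraMap_mul (α : L) :
    ∃ (w : E) (c : k), IsIntegral Λ w ∧ α = algebraMap k L c * algebraMap E L w := by
  obtain ⟨⟨e, l⟩, hle⟩ :=
    IsLocalizedModule.surj (nonZeroDivisors Λ) (IsScalarTower.toAlgHom Λ E L).toLinearMap α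
  obtain ⟨y, hy, hye⟩ := (Algebra.IsAlgebraic.isAlgebraic (R := Λ) e).exists_integral_multiple
  have hne {a : Λ} (ha : a ≠ 0) : algebraMap k L (algebraMap Λ k a) ≠ 0 :=
    (map_ne_zero _).mpr ((map_ne_zero_iff _ (IsFractionRing.injective Λ k)).mpr ha)
  have hl := hne (nonZeroDivisors.ne_zero l.2)
  refine ⟨y • e, (algebraMap Λ k l)⁻¹ * (algebraMap Λ k y)⁻¹, hye, ?_⟩
  have hle' : algebraMap k L (algebraMap Λ k l) * α = algebraMap E L e := by
    rw [← IsScalarTower.algebraMap_apply, ← Algebra.smul_def]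
    exact hle
  have hw : algebraMap E L (y • e) =
      algebraMap k L (algebraMap Λ k y) * (algebraMap k L (algebraMap Λ k l) * α) := by
    rw [hle', Algebra.smul_def, map_mul, ← IsScalarTower.algebraMap_apply,
      ← IsScalarTower.algebraMap_apply]
  rw [hw, map_mul, map_inv₀, map_inv₀]
  field_simp [hne hy]

variable [CharZero k] [Algebra.FiniteType Λ E]

theorem exists_isIntegral_adjoin_algebraMap_eq_top :
    ∃ w : E, IsIntegral Λ w ∧ Algebra.adjoin k {algebraMap E L w} = ⊤ := by
  have : Algebra.IsAlgebraic E L := IsLocalization.isAlgebraic L (nonZeroDivisors E)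
  have : Algebra.IsAlgebraic Λ L := .trans Λ E L
  have : Algebra.IsAlgebraic k L := (IsFractionRing.comap_isAlgebraic_iff (A := Λ)).mp inferInstance
  have : Algebra.EssFiniteType E L := .of_isLocalization L (nonZeroDivisors E)
  have : Algebra.EssFiniteType Λ L := .comp Λ E L
  have : Algebra.EssFiniteType k L := .of_comp Λ k L
  have := Algebra.finite_of_essFiniteType_of_isAlgebraic (F := k) (E := L)
  obtain ⟨α, hα⟩ := Field.exists_primitive_element k L
  obtain ⟨w, c, hw, rfl⟩ := exists_isIntegral_algebraMap_eq_algebraMap_mul (Λ := Λ) (E := E) k L α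
  refine ⟨w, hw, Algebra.adjoin_eq_top_of_primitive_element
    (Algebra.IsAlgebraic.isAlgebraic _) (top_unique (hα.ge.trans ?_))⟩
  rw [IntermediateField.adjoin_simple_le_iff]
  exact mul_mem (IntermediateField.algebraMap_mem _ _)
    (IntermediateField.mem_adjoin_simple_self k _)

end PrimitiveElement

attribute [local instance] Polynomial.algebra Polynomial.isLocalization in
theorem exists_ne_zero_forall_algebraMap_mul_eq_aeval {Λ E κ : Type*} [CommRing Λ] [IsDomain Λ]
    [CommRing E] [Algebra Λ E] (k L : Type*) [Field k] [Field L] [Algebra Λ k]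
    [IsFractionRing Λ k] [Algebra E L] [IsFractionRing E L] [Algebra Λ L] [Algebra k L]
    [IsScalarTower Λ k L] [IsScalarTower Λ E L] [Finite κ] {w : E}
    (hw : Algebra.adjoin k {algebraMap E L w} = ⊤) (g : κ → E) :
    ∃ δ : Λ, δ ≠ 0 ∧ ∃ p : κ → Polynomial Λ,
      ∀ i, algebraMap Λ E δ * g i = Polynomial.aeval w (p i) := by
  have hmem i : algebraMap E L (g i) ∈ Algebra.adjoin k {algebraMap E L w} := hw ▸ trivial
  simp only [Algebra.adjoin_singleton_eq_range_aeval, AlgHom.mem_range] at hmem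
  choose q hq using hmem
  obtain ⟨⟨_, δ, hδ, rfl⟩, hint⟩ := IsLocalization.exist_integer_multiples_of_finite
    ((nonZeroDivisors Λ).map (Polynomial.C : Λ →+* Polynomial Λ)) q
  choose p hp using hint
  refine ⟨δ, nonZeroDivisors.ne_zero hδ, p, fun i => IsFractionRing.injective E L ?_⟩
  have hpi : (p i).map (algebraMap Λ k) = Polynomial.C (algebraMap Λ k δ) * q i := by
    refine (hp i).trans ?_
    rw [Algebra.smul_def, Polynomial.algebraMap_def, Polynomial.coe_mapRingHom, Polynomial.map_C]
  have hval := congrArg (Polynomial.aeval (algebraMap E L w)) hpi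
  rw [Polynomial.aeval_map_algebraMap, Polynomial.aeval_algebraMap_apply, map_mul,
    Polynomial.aeval_C, hq, ← IsScalarTower.algebraMap_apply] at hval
  rw [hval, map_mul, ← IsScalarTower.algebraMap_apply]

/-- Polynomial equations over `Λ` satisfied by a family `(g k)` of elements of a `Λ`-algebra, once a
root `w` of `relation` is given: `denom * g k` is the value of `num k` at `w`. -/
structure PrimitiveEquations (Λ κ : Type*) [CommRing Λ] where
  relation : Polynomial Λ
  denom : Λ
  num : κ → Polynomial Λ

namespace PrimitiveEquations

variable {Λ κ : Type*} [CommRing Λ] (S : PrimitiveEquations Λ κ)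

/-- The element which controls the lifting of approximate solutions: by Newton's method, a solution
modulo `T * disc` can be moved to an exact solution without changing it modulo `T`. -/
noncomputable def disc : Polynomial Λ :=
  Polynomial.derivative S.relation ^ 2 * Polynomial.C S.denom

/-- The family `g` solves the equations modulo `D`; the coefficients of the equations and the root
of `relation` are the values of the ring homomorphism `f` on `Λ` and at `X`. -/
def IsSolutionMod {B : Type*} [CommRing B] (f : Polynomial Λ →+* B) (g : κ → B) (D : B) : Prop :=
  D ∣ f S.relation ∧ ∀ k, D ∣ f (Polynomial.C S.denom) * g k - f (S.num k)

/-- The equations determine the family `g` in the domain `E` generically: `g` is an exact solution,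
the image of `f` is `Λ[X] / (relation)`, and `disc` does not vanish on it. -/
structure Presents {E : Type*} [CommRing E] (f : Polynomial Λ →+* E) (g : κ → E) : Prop where
  map_eq_zero_iff : ∀ H, f H = 0 ↔ S.relation ∣ H
  map_disc_ne_zero : f S.disc ≠ 0
  map_denom_mul : ∀ k, f (Polynomial.C S.denom) * g k = f (S.num k)

variable {S}

theorem IsSolutionMod.map {B B' : Type*} [CommRing B] [CommRing B'] {f : Polynomial Λ →+* B}
    {g : κ → B} {D : B} (h : S.IsSolutionMod f g D) (ν : B →+* B') :
    S.IsSolutionMod (ν.comp f) (fun k => ν (g k)) (ν D) :=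
  ⟨map_dvd ν h.1, fun k => by simpa using map_dvd ν (h.2 k)⟩

theorem Presents.isSolutionMod_zero {E : Type*} [CommRing E] {f : Polynomial Λ →+* E} {g : κ → E}
    (h : S.Presents f g) : S.IsSolutionMod f g 0 :=
  ⟨zero_dvd_iff.mpr ((h.map_eq_zero_iff _).mpr dvd_rfl), fun k =>
    zero_dvd_iff.mpr (sub_eq_zero.mpr (h.map_denom_mul k))⟩

theorem exists_presents {Λ E κ : Type*} [CommRing Λ] [IsDomain Λ] [IsIntegrallyClosed Λ]
    [CharZero Λ] [CommRing E] [IsDomain E] [Algebra Λ E] [FaithfulSMul Λ E]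
    [Algebra.IsAlgebraic Λ E] [Algebra.FiniteType Λ E] [Finite κ] (g : κ → E) :
    ∃ (S : PrimitiveEquations Λ κ) (f : Polynomial Λ →+* E), S.Presents f g := by
  let : Algebra (FractionRing Λ) (FractionRing E) := FractionRing.liftAlgebra Λ _
  have := FractionRing.isScalarTower_liftAlgebra Λ (FractionRing E)
  have := charZero_of_injective_algebraMap (IsFractionRing.injective Λ (FractionRing Λ))
  obtain ⟨w, hw, hadjoin⟩ := exists_isIntegral_adjoin_algebraMap_eq_top (Λ := Λ) (E := E)
    (FractionRing Λ) (FractionRing E)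
  obtain ⟨δ, hδ, p, hp⟩ := exists_ne_zero_forall_algebraMap_mul_eq_aeval (Λ := Λ)
    (FractionRing Λ) (FractionRing E) hadjoin g
  have hker H : Polynomial.aeval w H = 0 ↔ minpoly Λ w ∣ H :=
    minpoly.isIntegrallyClosed_dvd_iff hw H
  refine ⟨⟨minpoly Λ w, δ, p⟩, (Polynomial.aeval w).toRingHom, hker, ?_, fun k => ?_⟩
  · have hderiv : Polynomial.aeval w (minpoly Λ w).derivative ≠ 0 := by
      rw [Ne, hker]
      have hpos := minpoly.natDegree_pos hw
      refine (minpoly.monic hw).not_dvd_of_natDegree_lt (fun h => ?_)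
        (Polynomial.natDegree_derivative_lt hpos.ne')
      exact hpos.ne' (Polynomial.derivative_eq_zero.mp h)
    simpa [disc] using ⟨hderiv, hδ⟩
  · simpa using hp k

theorem exists_presents_mvPolynomial {E : Type u} [CommRing E] [IsDomain E] [CharZero E]
    {κ : Type*} [Finite κ] {g : κ → E} (hg : Algebra.adjoin ℤ (Set.range g) = ⊤) :
    ∃ (ι : Type u) (_ : Finite ι) (S : PrimitiveEquations (MvPolynomial ι ℤ) κ)
      (f : Polynomial (MvPolynomial ι ℤ) →+* E), S.Presents f g := by
  have : Algebra.FiniteType ℤ E :=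
    ⟨Subalgebra.fg_def.mpr ⟨_, Set.finite_range g, hg⟩⟩
  have : Algebra.IsAlgebraic (Algebra.adjoin ℤ (Set.range g)) E := by
    rw [hg]
    exact ⟨fun a => isAlgebraic_algebraMap (⟨a, trivial⟩ : (⊤ : Subalgebra ℤ E))⟩
  have : FaithfulSMul ℤ E := (faithfulSMul_iff_algebraMap_injective ℤ E).mpr
    (algebraMap ℤ E).injective_int
  obtain ⟨t, hts, ht⟩ := exists_isTranscendenceBasis_subset (R := ℤ) (Set.range g)
  have : Finite t := (Set.finite_range g).subset hts
  let : Algebra (MvPolynomial t ℤ) E := (MvPolynomial.aeval Subtype.val).toAlgebra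
  have : FaithfulSMul (MvPolynomial t ℤ) E :=
    (faithfulSMul_iff_algebraMap_injective _ E).mpr ht.1
  have : IsScalarTower ℤ (MvPolynomial t ℤ) E := .of_algebraMap_eq fun z => by simp
  have : Algebra.FiniteType (MvPolynomial t ℤ) E := .of_restrictScalars_finiteType ℤ _ _
  have : Algebra.IsAlgebraic (MvPolynomial t ℤ) E :=
    have := ht.isAlgebraic
    .of_ringHom_of_comp_eq ht.1.aevalEquiv.toRingEquiv.toRingHom (RingHom.id E)
      ht.1.aevalEquiv.surjective Function.injective_id
      (RingHom.ext fun a => ht.1.algebraMap_aevalEquiv a)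
  obtain ⟨S, f, hS⟩ := exists_presents (Λ := MvPolynomial t ℤ) g
  exact ⟨t, inferInstance, S, f, hS⟩

end PrimitiveEquations

theorem exists_ringHom_forall_apply_eq_of_mul_eq {R E B κ : Type*} [CommRing R] [CommRing E]
    [CommRing B] [IsDomain B] {f : R →+* E} {f' : R →+* B} (hker : RingHom.ker f ≤ RingHom.ker f')
    {δ : R} (hδ : f' δ ≠ 0) {g : κ → E} (hg : Algebra.adjoin ℤ (Set.range g) = ⊤) {g' : κ → B}
    {p : κ → R} (hp : ∀ k, f δ * g k = f (p k)) (hp' : ∀ k, f' δ * g' k = f' (p k)) :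
    ∃ φ : E →+* B, ∀ k, φ (g k) = g' k := by
  let F : MvPolynomial κ ℤ →+* E := (MvPolynomial.aeval g).toRingHom
  let F' : MvPolynomial κ ℤ →+* B := (MvPolynomial.aeval g').toRingHom
  have hF : Function.Surjective F := by
    rw [Algebra.adjoin_range_eq_range_aeval, AlgHom.range_eq_top] at hg
    exact hg
  have hclear q : ∃ N H, f δ ^ N * F q = f H ∧ f' δ ^ N * F' q = f' H := by
    induction q using MvPolynomial.induction_on with
    | C a => exact ⟨0, (a : R), by simp [F], by simp [F']⟩
    | add q r hq hr =>
      obtain ⟨N, H, hH, hH'⟩ := hq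
      obtain ⟨M, J, hJ, hJ'⟩ := hr
      refine ⟨N + M, δ ^ M * H + δ ^ N * J, ?_, ?_⟩
      · simp only [map_add, map_mul, map_pow, ← hH, ← hJ]; ring
      · simp only [map_add, map_mul, map_pow, ← hH', ← hJ']; ring
    | mul_X q i hq =>
      obtain ⟨N, H, hH, hH'⟩ := hq
      have hFX : F (MvPolynomial.X i) = g i := MvPolynomial.aeval_X g i
      have hFX' : F' (MvPolynomial.X i) = g' i := MvPolynomial.aeval_X g' i
      refine ⟨N + 1, H * p i, ?_, ?_⟩
      · rw [map_mul, map_mul, ← hH, ← hp, hFX]; ring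
      · rw [map_mul, map_mul, ← hH', ← hp', hFX']; ring
  have hle : RingHom.ker F ≤ RingHom.ker F' := fun q hq => by
    obtain ⟨N, H, hH, hH'⟩ := hclear q
    rw [RingHom.mem_ker.mp hq, mul_zero] at hH
    rw [hker hH.symm] at hH'
    exact (mul_eq_zero.mp hH').resolve_left (pow_ne_zero _ hδ)
  refine ⟨RingHom.liftOfSurjective F hF ⟨F', hle⟩, fun k => ?_⟩
  have hlift := RingHom.liftOfRightInverse_comp_apply F _ (Function.rightInverse_surjInv hF)
    ⟨F', hle⟩ (MvPolynomial.X k)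
  simpa [F, F'] using hlift

namespace PrimitiveEquations

variable {Λ κ B : Type*} [CommRing Λ] [CommRing B] {S : PrimitiveEquations Λ κ}

theorem Presents.exists_ringHom [IsDomain B] {E : Type*} [CommRing E] {f : Polynomial Λ →+* E}
    {g : κ → E} (h : S.Presents f g) (hg : Algebra.adjoin ℤ (Set.range g) = ⊤)
    {f' : Polynomial Λ →+* B} {g' : κ → B} (h' : S.IsSolutionMod f' g' 0)
    (hdenom : f' (Polynomial.C S.denom) ≠ 0) : ∃ φ : E →+* B, ∀ k, φ (g k) = g' k := by
  refine exists_ringHom_forall_apply_eq_of_mul_eq (f := f) (f' := f') (fun H hH => ?_) hdenom hg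
    h.map_denom_mul fun k => sub_eq_zero.mp (zero_dvd_iff.mp (h'.2 k))
  exact zero_dvd_iff.mp (h'.1.trans (map_dvd f' ((h.map_eq_zero_iff H).mp hH)))

theorem IsSolutionMod.exists_lift (I : Ideal B) [IsAdicComplete I B] {f : Polynomial Λ →+* B}
    {g : κ → B} {T P Q : B} (hT : T ∈ I) (hQ : IsUnit Q) (hdisc : f S.disc = P * Q)
    (h : S.IsSolutionMod f g (T * P)) :
    ∃ (f' : Polynomial Λ →+* B) (g' : κ → B), S.IsSolutionMod f' g' 0 ∧
      f' (Polynomial.C S.denom) = f (Polynomial.C S.denom) ∧ ∀ k, T ∣ g' k - g k := by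
  obtain ⟨q, rfl⟩ := hQ
  let f₀ := f.comp Polynomial.C
  have hf H : f H = (H.map f₀).eval (f Polynomial.X) := by
    rw [Polynomial.eval_map, ← Polynomial.coe_eval₂RingHom]
    congr 1
    ext <;> simp [f₀]
  set w := f Polynomial.X
  set δ := f (Polynomial.C S.denom)
  set a := ((S.relation.map f₀).derivative).eval w
  have hP : P = a ^ 2 * δ * ↑q⁻¹ := by
    rw [Units.eq_mul_inv_iff_mul_eq, ← hdisc, disc, map_mul, map_pow, hf (Polynomial.derivative _),
      ← Polynomial.derivative_map]
  obtain ⟨c, hc⟩ := h.1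
  obtain ⟨z, hz⟩ := exists_eval_eq_zero_of_eval_eq I (S.relation.map f₀) (w := w) (δ := δ)
    (c := ↑q⁻¹ * c) hT (by rw [← hf, hc, hP]; ring)
  choose s hs using h.2
  have hsub k := Polynomial.sub_dvd_eval_sub (w + a * (T * δ * z)) w ((S.num k).map f₀)
  choose r hr using hsub
  refine ⟨Polynomial.eval₂RingHom f₀ (w + a * (T * δ * z)),
    fun k => g k + T * (a * z * r k - a ^ 2 * ↑q⁻¹ * s k), ⟨?_, fun k => ?_⟩, ?_, fun k => ?_⟩
  · rw [zero_dvd_iff, Polynomial.coe_eval₂RingHom, ← Polynomial.eval_map, hz]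
  · rw [zero_dvd_iff, Polynomial.coe_eval₂RingHom, Polynomial.eval₂_C, ← Polynomial.eval_map]
    have hrk := hr k
    have hsk := hs k
    rw [← hf] at hrk
    rw [hP] at hsk
    linear_combination hsk - hrk
  · rw [Polynomial.coe_eval₂RingHom, Polynomial.eval₂_C, RingHom.comp_apply]
  · simp

theorem Presents.exists_ringHom_of_isSolutionMod [IsDomain B] {E : Type*} [CommRing E]
    {f : Polynomial Λ →+* E} {g : κ → E} (h : S.Presents f g)
    (hg : Algebra.adjoin ℤ (Set.range g) = ⊤) (I : Ideal B) [IsAdicComplete I B]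
    {f' : Polynomial Λ →+* B} {g' : κ → B} {T P Q : B} (hT : T ∈ I) (hP : P ≠ 0) (hQ : IsUnit Q)
    (hdisc : f' S.disc = P * Q) (h' : S.IsSolutionMod f' g' (T * P)) :
    ∃ φ : E →+* B, ∀ k, T ∣ φ (g k) - g' k := by
  obtain ⟨f'', g'', hsol, hdenom, hdvd⟩ := h'.exists_lift I hT hQ hdisc
  have hne : f' S.disc ≠ 0 := hdisc ▸ mul_ne_zero hP hQ.ne_zero
  rw [disc, map_mul] at hne
  obtain ⟨φ, hφ⟩ := h.exists_ringHom hg hsol (hdenom ▸ right_ne_zero_of_mul hne)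
  exact ⟨φ, fun k => hφ k ▸ hdvd k⟩

end PrimitiveEquations

theorem exists_ringHom_forall_dvd_sub {ι B C : Type*} [CommRing B] [CommRing C]
    (f : Polynomial (MvPolynomial ι ℤ) →+* B) (j : C →+* B) (D : B)
    (hvar : ∀ i, ∃ c, D ∣ f (Polynomial.C (MvPolynomial.X i)) - j c)
    (hX : ∃ c, D ∣ f Polynomial.X - j c) :
    ∃ f' : Polynomial (MvPolynomial ι ℤ) →+* C, ∀ H, D ∣ f H - j (f' H) := by
  choose y hy using hvar
  obtain ⟨w, hw⟩ := hX
  let f' : Polynomial (MvPolynomial ι ℤ) →+* C :=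
    Polynomial.eval₂RingHom (MvPolynomial.eval₂Hom (Int.castRingHom C) y) w
  let π := Ideal.Quotient.mk (Ideal.span {D})
  have hπ b c : π b = π c ↔ D ∣ b - c := by
    rw [Ideal.Quotient.mk_eq_mk_iff_sub_mem, Ideal.mem_span_singleton]
  have hcongr : π.comp f = π.comp (j.comp f') := by
    refine Polynomial.ringHom_ext' (MvPolynomial.ringHom_ext' (Subsingleton.elim _ _) ?_) ?_
    · intro i
      simpa [f', hπ] using hy i
    · simpa [f', hπ] using hw
  exact ⟨f', fun H => (hπ _ _).mp (RingHom.congr_fun hcongr H)⟩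

section Distinguished

variable {A : Type*} [CommRing A] {I : Ideal A} [IsAdicComplete I A] {D : Polynomial A}

theorem exists_polynomial_dvd_sub (hD : D.IsDistinguishedAt I) (f : PowerSeries A) :
    ∃ r : Polynomial A, (D : PowerSeries A) ∣ f - r := by
  obtain ⟨q, hq⟩ := hD.algEquivQuotient.surjective (Ideal.Quotient.mk _ f)
  obtain ⟨r, rfl⟩ := Ideal.Quotient.mk_surjective q
  refine ⟨r, ?_⟩
  rw [← Ideal.mem_span_singleton, ← Ideal.Quotient.eq, ← hq]
  rfl

theorem dvd_of_coe_dvd_coe (hD : D.IsDistinguishedAt I) {f : Polynomial A}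
    (h : (D : PowerSeries A) ∣ f) : D ∣ f := by
  rw [← Ideal.mem_span_singleton, ← Ideal.Quotient.eq_zero_iff_mem] at h ⊢
  exact hD.algEquivQuotient.injective (h.trans (map_zero _).symm)

end Distinguished

theorem isDistinguishedAt_X_pow {A : Type*} [CommRing A] (I : Ideal A) (n : ℕ) :
    (Polynomial.X ^ n : Polynomial A).IsDistinguishedAt I where
  mem {i} hi := by
    nontriviality A
    rw [Polynomial.natDegree_X_pow] at hi
    rw [Polynomial.coeff_X_pow, if_neg hi.ne]
    exact zero_mem I
  monic := Polynomial.monic_X_pow n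

namespace PrimitiveEquations

variable {Λ κ : Type*} [CommRing Λ] {S : PrimitiveEquations Λ κ}

theorem IsSolutionMod.congr {B : Type*} [CommRing B] {f f' : Polynomial Λ →+* B} {g g' : κ → B}
    {D : B} (h : S.IsSolutionMod f g D) (hf : ∀ H, D ∣ f H - f' H) (hg : ∀ k, D ∣ g k - g' k) :
    S.IsSolutionMod f' g' D := by
  refine ⟨(dvd_iff_dvd_of_dvd_sub (hf S.relation)).mp h.1, fun k => ?_⟩
  have hsum := dvd_add (dvd_sub (h.2 k) ((hf (Polynomial.C S.denom)).mul_right (g k)))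
    (dvd_sub (hf (S.num k)) ((hg k).mul_left (f' (Polynomial.C S.denom))))
  convert hsum using 1
  ring

theorem IsSolutionMod.of_map {B B' : Type*} [CommRing B] [CommRing B'] {f : Polynomial Λ →+* B}
    {g : κ → B} {D : B} {ν : B →+* B'} (hν : ∀ b, ν D ∣ ν b → D ∣ b)
    (h : S.IsSolutionMod (ν.comp f) (fun k => ν (g k)) (ν D)) : S.IsSolutionMod f g D :=
  ⟨hν _ h.1, fun k => hν _ (by simpa using h.2 k)⟩

/-- Polynomials `g k` solving the equations up to an error divisible by `X ^ 2 * P`, where `P` is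
monic and differs from `disc` only by a factor which is invertible as a power series. Over any
coefficient ring this is enough precision to deform the `g k`, modulo `X ^ 2`, to an exact solution
in power series. -/
def IsApproxSolution (S : PrimitiveEquations Λ κ) {A : Type*} [CommRing A]
    (f : Polynomial Λ →+* Polynomial A) (g : κ → Polynomial A) : Prop :=
  ∃ P Q : Polynomial A, P.Monic ∧ IsUnit (Q.coeff 0) ∧ f S.disc = P * Q ∧
    S.IsSolutionMod f g (Polynomial.X ^ 2 * P)

theorem IsSolutionMod.exists_isApproxSolution {A ι : Type*} [CommRing A] [IsDomain A]
    [IsLocalRing A] [IsAdicComplete (IsLocalRing.maximalIdeal A) A]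
    {S : PrimitiveEquations (MvPolynomial ι ℤ) κ}
    {f : Polynomial (MvPolynomial ι ℤ) →+* PowerSeries A} {g : κ → PowerSeries A}
    (h : S.IsSolutionMod f g 0) (hdisc : (f S.disc).map (IsLocalRing.residue A) ≠ 0) :
    ∃ (f' : Polynomial (MvPolynomial ι ℤ) →+* Polynomial A) (g' : κ → Polynomial A),
      S.IsApproxSolution f' g' ∧ ∀ k, PowerSeries.X ^ 2 ∣ g k - (g' k : PowerSeries A) := by
  obtain ⟨P, U, hPU⟩ := PowerSeries.exists_isWeierstrassFactorization hdisc
  have hP := hPU.isDistinguishedAt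
  have hD := (isDistinguishedAt_X_pow (IsLocalRing.maximalIdeal A) 2).mul hP
  let j : Polynomial A →+* PowerSeries A := Polynomial.coeToPowerSeries.ringHom
  have hjD : j (Polynomial.X ^ 2 * P) = PowerSeries.X ^ 2 * (P : PowerSeries A) := by simp [j]
  have hrem (b : PowerSeries A) : ∃ c, j (Polynomial.X ^ 2 * P) ∣ b - j c :=
    exists_polynomial_dvd_sub hD b
  obtain ⟨f', hf'⟩ := exists_ringHom_forall_dvd_sub f j (j (Polynomial.X ^ 2 * P))
    (fun i => hrem _) (hrem _)
  choose g' hg' using fun k => hrem (g k)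
  have hsol : S.IsSolutionMod f' g' (Polynomial.X ^ 2 * P) :=
    .of_map (ν := j) (fun b hb => dvd_of_coe_dvd_coe hD hb)
      (IsSolutionMod.congr ⟨(dvd_zero _).trans h.1, fun k => (dvd_zero _).trans (h.2 k)⟩ hf' hg')
  obtain ⟨c, hc⟩ := hf' S.disc
  rw [hPU.eq_mul, hjD] at hc
  obtain ⟨Q, hQ⟩ : P ∣ f' S.disc := by
    refine dvd_of_coe_dvd_coe hP ⟨U - PowerSeries.X ^ 2 * c, ?_⟩
    change j (f' S.disc) = _
    linear_combination -hc
  have hQU : j Q = U - PowerSeries.X ^ 2 * c := by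
    have hP0 : j P ≠ 0 := by simpa [j] using hP.monic.ne_zero
    refine mul_left_cancel₀ hP0 ?_
    rw [← map_mul, ← hQ]
    change j (f' S.disc) = (P : PowerSeries A) * _
    linear_combination -hc
  have hQ0 : Q.coeff 0 = PowerSeries.constantCoeff U := by
    simpa [j] using congrArg PowerSeries.constantCoeff hQU
  refine ⟨f', g', ⟨P, Q, hP.monic, hQ0 ▸ hPU.isUnit.map _, hQ, hsol⟩, fun k => ?_⟩
  exact (Dvd.intro _ hjD.symm).trans (hg' k)

theorem IsApproxSolution.map {A A' : Type*} [CommRing A] [CommRing A']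
    {f : Polynomial Λ →+* Polynomial A} {g : κ → Polynomial A} (h : S.IsApproxSolution f g)
    (φ : A →+* A') :
    S.IsApproxSolution ((Polynomial.mapRingHom φ).comp f) fun k => (g k).map φ := by
  obtain ⟨P, Q, hP, hQ, hdisc, hsol⟩ := h
  refine ⟨P.map φ, Q.map φ, hP.map φ, ?_, ?_, ?_⟩
  · rw [Polynomial.coeff_map]
    exact hQ.map φ
  · rw [RingHom.comp_apply, hdisc, Polynomial.coe_mapRingHom, Polynomial.map_mul]
  · simpa using hsol.map (Polynomial.mapRingHom φ)

theorem Presents.exists_ringHom_powerSeries {A E : Type*} [CommRing A] [IsDomain A] [CommRing E]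
    {f : Polynomial Λ →+* E} {g : κ → E} (h : S.Presents f g)
    (hg : Algebra.adjoin ℤ (Set.range g) = ⊤) {f' : Polynomial Λ →+* Polynomial A}
    {g' : κ → Polynomial A} (h' : S.IsApproxSolution f' g') :
    ∃ φ : E →+* PowerSeries A, ∀ k, PowerSeries.X ^ 2 ∣ φ (g k) - (g' k : PowerSeries A) := by
  obtain ⟨P, Q, hP, hQ, hdisc, hsol⟩ := h'
  let j : Polynomial A →+* PowerSeries A := Polynomial.coeToPowerSeries.ringHom
  have hjD : j (Polynomial.X ^ 2 * P) = PowerSeries.X ^ 2 * j P := by simp [j]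
  refine h.exists_ringHom_of_isSolutionMod hg (Ideal.span {(PowerSeries.X : PowerSeries A)})
    (f' := j.comp f') (T := PowerSeries.X ^ 2) (P := j P) (Q := j Q) ?_ ?_ ?_ ?_ ?_
  · exact Ideal.pow_mem_of_mem _ (Ideal.mem_span_singleton_self _) 2 two_pos
  · simpa [j] using hP.ne_zero
  · simpa [j, PowerSeries.isUnit_iff_constantCoeff] using hQ
  · rw [RingHom.comp_apply, hdisc, map_mul]
  · exact hjD ▸ hsol.map j

end PrimitiveEquations

theorem exists_subalgebra_fg_forall_mem_lifts {R A α : Type*} [CommRing R] [CommRing A]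
    [Algebra R A] [Finite α] (q : α → Polynomial A) {s : Set A} (hs : s.Finite) :
    ∃ E : Subalgebra R A, E.FG ∧ s ⊆ E ∧ ∀ a, q a ∈ Polynomial.lifts (algebraMap E A) := by
  have hfin : (s ∪ ⋃ a, ((q a).coeffs : Set A)).Finite :=
    hs.union (Set.finite_iUnion fun a => Finset.finite_toSet _)
  have hsub := Algebra.subset_adjoin (R := R) (s := s ∪ ⋃ a, ((q a).coeffs : Set A))
  refine ⟨Algebra.adjoin R _, Subalgebra.fg_def.mpr ⟨_, hfin, rfl⟩,
    Set.subset_union_left.trans hsub, fun a => ?_⟩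
  rw [Polynomial.lifts_iff_coeff_lifts]
  intro n
  by_cases hn : (q a).coeff n = 0
  · exact ⟨0, by rw [hn, map_zero]⟩
  · exact ⟨⟨_, hsub (.inr (Set.mem_iUnion.mpr ⟨a, Polynomial.coeff_mem_coeffs hn⟩))⟩, rfl⟩

theorem PrimitiveEquations.IsApproxSolution.of_map {ι κ A E : Type*} [CommRing A] [CommRing E]
    {S : PrimitiveEquations (MvPolynomial ι ℤ) κ} {φ : E →+* A} (hφ : Function.Injective φ)
    {f : Polynomial (MvPolynomial ι ℤ) →+* Polynomial E} {g : κ → Polynomial E}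
    {P Q : Polynomial E} (hP : (P.map φ).Monic) (hQ : IsUnit (Q.coeff 0))
    (hdisc : (f S.disc).map φ = P.map φ * Q.map φ)
    (h : S.IsSolutionMod ((Polynomial.mapRingHom φ).comp f) (fun k => (g k).map φ)
      (Polynomial.X ^ 2 * P.map φ)) : S.IsApproxSolution f g := by
  have hPm : P.Monic := hφ.monic_map_iff.mpr hP
  refine ⟨P, Q, hPm, hQ, Polynomial.map_injective φ hφ (by simpa using hdisc), ?_⟩
  refine .of_map (ν := Polynomial.mapRingHom φ) (fun b hb => ?_) (by simpa using h)
  exact (Polynomial.map_dvd_map φ hφ ((Polynomial.monic_X_pow 2).mul hPm)).mp hb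

theorem PrimitiveEquations.IsApproxSolution.exists_subalgebra_fg {ι κ A : Type*} [Finite ι]
    [Finite κ] [CommRing A] {S : PrimitiveEquations (MvPolynomial ι ℤ) κ}
    {f : Polynomial (MvPolynomial ι ℤ) →+* Polynomial A} {g : κ → Polynomial A}
    (h : S.IsApproxSolution f g) {s : Set A} (hs : s.Finite) :
    ∃ E : Subalgebra ℤ A, E.FG ∧ s ⊆ E ∧
      ∃ (f' : Polynomial (MvPolynomial ι ℤ) →+* Polynomial E) (g' : κ → Polynomial E),
        S.IsApproxSolution f' g' ∧ ∀ k, (g' k).map (algebraMap E A) = g k := by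
  obtain ⟨P, Q, hP, hQ, hdisc, hsol⟩ := h
  obtain ⟨c, hc⟩ := hQ.exists_right_inv
  obtain ⟨E, hE, hsE, hlift⟩ := exists_subalgebra_fg_forall_mem_lifts (R := ℤ)
    (Sum.elim (Sum.elim (fun i => f (Polynomial.C (MvPolynomial.X i))) g) ![P, Q, f Polynomial.X])
    (hs.insert c)
  let j := Polynomial.mapRingHom (algebraMap E A)
  have hdvd (q : Polynomial A) : (∃ c, j c = q) → ∃ c, 0 ∣ q - j c :=
    fun ⟨c, hc⟩ => ⟨c, by rw [hc, sub_self]⟩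
  choose g' hg' using fun k => (Polynomial.mem_lifts _).mp (hlift (.inl (.inr k)))
  obtain ⟨P', hP'⟩ := (Polynomial.mem_lifts _).mp (hlift (.inr 0))
  obtain ⟨Q', hQ'⟩ := (Polynomial.mem_lifts _).mp (hlift (.inr 1))
  obtain ⟨f', hf'⟩ := exists_ringHom_forall_dvd_sub f j 0
    (fun i => hdvd _ ((Polynomial.mem_lifts _).mp (hlift (.inl (.inl i)))))
    (hdvd _ ((Polynomial.mem_lifts _).mp (hlift (.inr 2))))
  obtain rfl : j.comp f' = f :=
    RingHom.ext fun H => (sub_eq_zero.mp (zero_dvd_iff.mp (hf' H))).symm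
  obtain rfl : P'.map (algebraMap E A) = P := hP'
  obtain rfl : Q'.map (algebraMap E A) = Q := hQ'
  obtain rfl : (fun k => (g' k).map (algebraMap E A)) = g := funext hg'
  refine ⟨E, hE, (Set.subset_insert _ _).trans hsE, f', g',
    .of_map Subtype.val_injective hP ?_ hdisc hsol, fun k => rfl⟩
  refine .of_mul_eq_one ⟨c, hsE (Set.mem_insert _ _)⟩ (Subtype.ext ?_)
  rw [Polynomial.coeff_map] at hc
  exact hc

theorem order_map_eq_of_order_lt {A K : Type*} [CommRing A] [CommRing K] [IsDomain K]
    (γ : PowerSeries A →+* PowerSeries K) {e N : ℕ} (hX : γ PowerSeries.X = PowerSeries.X ^ e)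
    (f : PowerSeries A)
    (hf : (γ (PowerSeries.C (PowerSeries.constantCoeff f.divXPowOrder))).order = N) (hN : N < e) :
    (γ f).order = (e * f.order.toNat + N : ℕ) := by
  set ψ := f.divXPowOrder
  obtain ⟨η, hη⟩ : PowerSeries.X ∣ ψ - PowerSeries.C (PowerSeries.constantCoeff ψ) := by
    rw [PowerSeries.X_dvd_iff]
    simp
  have hlt : (γ (PowerSeries.C (PowerSeries.constantCoeff ψ))).order <
      (γ (PowerSeries.X * η)).order := by
    rw [hf, map_mul, hX, PowerSeries.order_mul, PowerSeries.order_X_pow]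
    exact lt_of_lt_of_le (by exact_mod_cast hN) le_self_add
  have hψ : (γ ψ).order = N := by
    rw [eq_add_of_sub_eq' hη, map_add, PowerSeries.order_add_of_order_ne _ _ hlt.ne,
      inf_eq_left.mpr hlt.le, hf]
  conv_lhs => rw [← f.X_pow_order_mul_divXPowOrder]
  rw [map_mul, map_pow, hX, ← pow_mul, PowerSeries.order_mul,
    PowerSeries.order_X_pow, hψ, Nat.cast_add]

theorem exists_forall_order_eq {K : Type*} [Field K] (n : ℕ) (θ : MvPowerSeries (Fin n) K)
    (hθ : θ ≠ 0) :
    ∃ (e : Fin n → ℕ) (N : ℕ), (∀ i, e i ≠ 0) ∧ (∀ i : Fin n, i + 1 = n → e i = 1) ∧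
      (n = 0 → N = 0) ∧ ∀ γ : MvPowerSeries (Fin n) K →+* PowerSeries K,
        (∀ k, γ (MvPowerSeries.C k) = PowerSeries.C k) →
        (∀ i, γ (MvPowerSeries.X i) = PowerSeries.X ^ e i) → (γ θ).order = N := by
  induction n with
  | zero =>
    refine ⟨fun _ => 1, 0, fun _ => one_ne_zero, fun _ _ => rfl, fun _ => rfl, fun γ hC _ => ?_⟩
    have hconst : θ = MvPowerSeries.C (MvPowerSeries.constantCoeff θ) := by
      ext m
      rw [Subsingleton.elim m 0]
      simp
    rw [hconst] at hθ ⊢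
    rw [hC]
    refine PowerSeries.order_zero_of_unit (IsUnit.map _ (isUnit_iff_ne_zero.mpr fun h0 => ?_))
    exact hθ (by rw [h0, map_zero])
  | succ n ih =>
    let σ := MvPowerSeries.finSuccEquiv K n
    obtain ⟨e, N, he, hlast, hN, hγ⟩ := ih (PowerSeries.constantCoeff (σ θ).divXPowOrder) (by
      rw [Ne, PowerSeries.constantCoeff_divXPowOrder_eq_zero_iff]
      simpa using hθ)
    refine ⟨Fin.cons (N + 1) e, (N + 1) * (σ θ).order.toNat + N, Fin.cases (by simp)
      (by simpa using he), ?_, fun h => absurd h n.succ_ne_zero, fun γ hC hX => ?_⟩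
    · refine Fin.cases (fun h => ?_) fun i h => ?_
      · rw [Fin.cons_zero, hN (Nat.succ_injective h.symm)]
      · rw [Fin.cons_succ, hlast i (Nat.succ_injective h)]
    let γ' : PowerSeries (MvPowerSeries (Fin n) K) →+* PowerSeries K :=
      γ.comp σ.symm.toRingEquiv.toRingHom
    have hγ' z : γ' (σ z) = γ z := by simp [γ']
    rw [← hγ' θ]
    refine order_map_eq_of_order_lt γ' ?_ (σ θ)
      (hγ (γ'.comp PowerSeries.C) (fun k => ?_) fun i => ?_) N.lt_succ_self
    · rw [← MvPowerSeries.finSuccEquiv_X_zero, hγ', hX, Fin.cons_zero]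
    · rw [RingHom.comp_apply, ← MvPowerSeries.finSuccEquiv_C, hγ', hC]
    · rw [RingHom.comp_apply, ← MvPowerSeries.finSuccEquiv_X_succ, hγ', hX, Fin.cons_succ]

theorem exists_ringHom_map_constantCoeff_ne_zero {K : Type*} [Field K] {n : ℕ}
    {θ : MvPowerSeries (Fin (n + 1)) K} (hθ : θ ≠ 0) :
    ∃ (ψ : MvPowerSeries (Fin (n + 1)) K →+* PowerSeries (MvPowerSeries (Fin n) K))
      (e : Fin n → ℕ), (∀ k, e k ≠ 0) ∧ ψ (MvPowerSeries.X (Fin.last n)) = PowerSeries.X ∧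
      (∀ k, ψ (MvPowerSeries.X k.castSucc) =
        PowerSeries.C (MvPowerSeries.X k) + PowerSeries.X ^ e k) ∧
      (ψ θ).map MvPowerSeries.constantCoeff ≠ 0 := by
  obtain ⟨e, N, he, hlast, -, hγ⟩ := exists_forall_order_eq (n + 1) θ hθ
  let J : Ideal (MvPowerSeries (Fin (n + 1)) K) := Ideal.span (Set.range MvPowerSeries.X)
  have hXJ i : MvPowerSeries.X i ∈ J := Ideal.subset_span ⟨i, rfl⟩
  let y : Fin (n + 1) → MvPowerSeries (Fin (n + 1)) K := Fin.lastCases (MvPowerSeries.X 0)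
    fun k => MvPowerSeries.X k.succ + MvPowerSeries.X 0 ^ e k.castSucc
  have hy i : y i ∈ J := by
    refine Fin.lastCases ?_ (fun k => ?_) i
    · simpa [y] using hXJ 0
    · simpa [y] using add_mem (hXJ k.succ) (J.pow_mem_of_mem (hXJ 0) _ (Nat.pos_of_ne_zero (he _)))
  obtain ⟨τ, hτC, hτX⟩ := exists_mvPowerSeries_ringHom J MvPowerSeries.C hy
  let σ := MvPowerSeries.finSuccEquiv K n
  let ψ : MvPowerSeries (Fin (n + 1)) K →+* PowerSeries (MvPowerSeries (Fin n) K) :=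
    σ.toRingEquiv.toRingHom.comp τ
  have hψ z : ψ z = σ (τ z) := rfl
  have hψlast : ψ (MvPowerSeries.X (Fin.last n)) = PowerSeries.X := by
    simp [hψ, hτX, y, σ, MvPowerSeries.finSuccEquiv_X_zero]
  have hψcast k : ψ (MvPowerSeries.X k.castSucc) =
      PowerSeries.C (MvPowerSeries.X k) + PowerSeries.X ^ e k.castSucc := by
    simp [hψ, hτX, y, σ, MvPowerSeries.finSuccEquiv_X_zero, MvPowerSeries.finSuccEquiv_X_succ]
  refine ⟨ψ, fun k => e k.castSucc, fun k => he _, hψlast, hψcast, fun h0 => ?_⟩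
  have horder := hγ ((PowerSeries.map MvPowerSeries.constantCoeff).comp ψ) (fun k => ?_) fun i => ?_
  · rw [RingHom.comp_apply, h0, PowerSeries.order_zero] at horder
    exact ENat.top_ne_natCast _ horder
  · simp [hψ, hτC, σ, MvPowerSeries.finSuccEquiv_C]
  · refine Fin.lastCases ?_ (fun k => ?_) i
    · simp [hψlast, hlast (Fin.last n) (by simp)]
    · simp [hψcast]

theorem map_residue_ne_zero_of_map_constantCoeff_ne_zero {K : Type*} [Field K] {σ : Type*}
    {f : PowerSeries (MvPowerSeries σ K)} (hf : f.map MvPowerSeries.constantCoeff ≠ 0) :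
    f.map (IsLocalRing.residue (MvPowerSeries σ K)) ≠ 0 := by
  refine fun h => hf (PowerSeries.ext fun m => ?_)
  have hm := congrArg (PowerSeries.coeff m) h
  rw [PowerSeries.coeff_map, map_zero, IsLocalRing.residue_eq_zero_iff,
    IsLocalRing.mem_maximalIdeal, mem_nonunits_iff, MvPowerSeries.isUnit_iff_constantCoeff,
    isUnit_iff_ne_zero, not_not] at hm
  rw [PowerSeries.coeff_map, hm, map_zero]

namespace PrimitiveEquations

theorem Presents.exists_subalgebra_fg {E A ι κ : Type*} [Finite ι] [Finite κ] [CommRing E]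
    [CommRing A] [IsDomain A] [IsLocalRing A] [IsAdicComplete (IsLocalRing.maximalIdeal A) A]
    {S : PrimitiveEquations (MvPolynomial ι ℤ) κ} {f : Polynomial (MvPolynomial ι ℤ) →+* E}
    {g : κ → E} (h : S.Presents f g) (hg : Algebra.adjoin ℤ (Set.range g) = ⊤)
    (ψ : E →+* PowerSeries A) (hψ : (ψ (f S.disc)).map (IsLocalRing.residue A) ≠ 0)
    {s : Set A} (hs : s.Finite) :
    ∃ E' : Subalgebra ℤ A, E'.FG ∧ s ⊆ E' ∧ ∃ q : κ → Polynomial E',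
      (∀ k, PowerSeries.X ^ 2 ∣
        ψ (g k) - (((q k).map (algebraMap E' A) : Polynomial A) : PowerSeries A)) ∧
      ∀ {A' : Type*} [CommRing A'] [IsDomain A'] (φ' : E' →+* A'),
        ∃ φ : E →+* PowerSeries A', ∀ k, PowerSeries.X ^ 2 ∣
          φ (g k) - (((q k).map φ' : Polynomial A') : PowerSeries A') := by
  have hsol : S.IsSolutionMod (ψ.comp f) (fun k => ψ (g k)) 0 := by
    simpa using h.isSolutionMod_zero.map ψ
  obtain ⟨f₁, g₁, happrox, hclose⟩ := hsol.exists_isApproxSolution hψ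
  obtain ⟨E', hfg, hsE', f₂, q, happrox', hq⟩ := happrox.exists_subalgebra_fg hs
  exact ⟨E', hfg, hsE', q, fun k => by rw [hq]; exact hclose k,
    fun φ' => h.exists_ringHom_powerSeries hg (happrox'.map φ')⟩

end PrimitiveEquations

theorem coeff_eq_of_X_pow_dvd_sub {A : Type*} [CommRing A] {a b : PowerSeries A} {n m : ℕ}
    (h : PowerSeries.X ^ n ∣ a - b) (hm : m < n) : PowerSeries.coeff m a = PowerSeries.coeff m b :=
  sub_eq_zero.mp ((map_sub _ a b).symm.trans (PowerSeries.X_pow_dvd_iff.mp h m hm))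

theorem sup_span_range_congr {A ι : Type*} [CommRing A] {J : Ideal A} {a b : ι → A}
    (h : ∀ i, a i - b i ∈ J) :
    J ⊔ Ideal.span (Set.range a) = J ⊔ Ideal.span (Set.range b) := by
  have hle {a b : ι → A} (h : ∀ i, a i - b i ∈ J) :
      Ideal.span (Set.range a) ≤ J ⊔ Ideal.span (Set.range b) := by
    rw [Ideal.span_le, Set.range_subset_iff]
    refine fun i => (Submodule.sub_mem_iff_left _ ?_).mp (le_sup_left (a := J) (h i))
    exact le_sup_right (a := J) (Ideal.subset_span ⟨i, rfl⟩)
  refine le_antisymm (sup_le le_sup_left (hle h)) (sup_le le_sup_left (hle fun i => ?_))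
  rw [← neg_sub]
  exact J.neg_mem (h i)

theorem span_range_eq_span_X_sup_map_C {A : Type*} [CommRing A] {n : ℕ}
    (v : Fin (n + 1) → PowerSeries A) (h0 : PowerSeries.constantCoeff (v (Fin.last n)) = 0)
    (h1 : PowerSeries.coeff 1 (v (Fin.last n)) = 1) :
    Ideal.span (Set.range v) = Ideal.span {PowerSeries.X} ⊔ (Ideal.span
      (Set.range fun k : Fin n => PowerSeries.constantCoeff (v k.castSucc))).map
        PowerSeries.C := by
  have hlast : Ideal.span {v (Fin.last n)} = Ideal.span {(PowerSeries.X : PowerSeries A)} := by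
    obtain ⟨c, hc⟩ := PowerSeries.X_dvd_iff.mpr h0
    rw [hc, ← zero_add 1, PowerSeries.coeff_succ_X_mul,
      PowerSeries.coeff_zero_eq_constantCoeff_apply] at h1
    rw [hc]
    exact Ideal.span_singleton_mul_right_unit
      (PowerSeries.isUnit_iff_constantCoeff.mpr (h1 ▸ isUnit_one)) _
  rw [← Fin.snoc_init_self v, Fin.range_snoc, Ideal.span_insert, hlast, Ideal.map_span,
    ← Set.range_comp]
  refine sup_span_range_congr fun k => ?_
  rw [Ideal.mem_span_singleton, PowerSeries.X_dvd_iff]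
  simp [Fin.init]

theorem isJacobsonRing_int : IsJacobsonRing ℤ := by
  rw [isJacobsonRing_iff_prime_eq]
  intro P hP
  by_cases hbot : P = ⊥
  · rw [hbot, eq_bot_iff]
    intro x hx
    have hunit := Int.isUnit_iff.mp (Ideal.mem_jacobson_bot.mp hx x)
    rcases hunit with h | h
    · exact mul_self_eq_zero.mp (by linarith)
    · nlinarith
  · have := hP.isMaximal hbot
    exact Ideal.jacobson_eq_self_of_isMaximal

theorem exists_charP_of_surjective {E F : Type*} [CommRing E] [Algebra.FiniteType ℤ E] [Field F]
    {f : E →+* F} (hf : Function.Surjective f) : ∃ p : ℕ, p.Prime ∧ CharP F p := by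
  have := isJacobsonRing_int
  have : Algebra.FiniteType ℤ F := .of_surjective f.toIntAlgHom hf
  have hfin := finite_of_finite_type_of_isJacobsonRing ℤ F
  obtain ⟨p, hp⟩ := CharP.exists F
  refine ⟨p, (CharP.char_is_prime_or_zero F p).resolve_right ?_, hp⟩
  rintro rfl
  have := CharP.charP_to_charZero F
  exact Int.not_isField
    (isField_of_isIntegral_of_isField (algebraMap ℤ F).injective_int (Field.toIsField F))

theorem exists_ringHom_field_charP (E : Type u) [CommRing E] [Nontrivial E]
    [Algebra.FiniteType ℤ E] :
    ∃ (F : Type u) (_ : Field F) (p : ℕ) (_ : Fact p.Prime) (_ : CharP F p),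
      Nonempty (E →+* F) := by
  obtain ⟨M, hM⟩ := Ideal.exists_maximal E
  let _ : Field (E ⧸ M) := Ideal.Quotient.field M
  obtain ⟨p, hp, hchar⟩ := exists_charP_of_surjective (f := Ideal.Quotient.mk M)
    Ideal.Quotient.mk_surjective
  exact ⟨E ⧸ M, inferInstance, p, ⟨hp⟩, hchar, ⟨Ideal.Quotient.mk M⟩⟩

/-- `HasCharPModel x` says that the elements `x₁, …, x_d` of `E` specialise to generators of the
maximal ideal of a power series ring `F⟦X₁, …, X_d⟧` over a field `F` of positive characteristic. -/
def HasCharPModel {d : ℕ} {E : Type u} [CommRing E] (x : Fin d → E) : Prop :=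
  ∃ (F : Type u) (_ : Field F) (p : ℕ) (_ : Fact p.Prime) (_ : CharP F p)
    (φ : E →+* MvPowerSeries (Fin d) F),
    Ideal.span (Set.range fun i => φ (x i)) = Ideal.span (Set.range MvPowerSeries.X)

namespace HasCharPModel

theorem of_fin_zero {E : Type u} [CommRing E] [Nontrivial E] [Algebra.FiniteType ℤ E]
    (x : Fin 0 → E) : HasCharPModel x := by
  obtain ⟨F, _, p, hp, hchar, ⟨f⟩⟩ := exists_ringHom_field_charP E
  exact ⟨F, inferInstance, p, hp, hchar, MvPowerSeries.C.comp f, by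
    rw [Set.range_eq_empty, Set.range_eq_empty]⟩

theorem of_powerSeries {n : ℕ} {E : Type u} [CommRing E] {x : Fin (n + 1) → E} {F : Type u}
    [Field F] {p : ℕ} [Fact p.Prime] [CharP F p]
    (φ : E →+* PowerSeries (MvPowerSeries (Fin n) F))
    (h0 : PowerSeries.constantCoeff (φ (x (Fin.last n))) = 0)
    (h1 : PowerSeries.coeff 1 (φ (x (Fin.last n))) = 1)
    (hspan : Ideal.span (Set.range fun k : Fin n =>
      PowerSeries.constantCoeff (φ (x k.castSucc))) = Ideal.span (Set.range MvPowerSeries.X)) :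
    HasCharPModel x := by
  let σ : MvPowerSeries (Fin (n + 1)) F ≃+* PowerSeries (MvPowerSeries (Fin n) F) :=
    (MvPowerSeries.finSuccEquiv F n).toRingEquiv
  refine ⟨F, inferInstance, p, inferInstance, inferInstance, σ.symm.toRingHom.comp φ, ?_⟩
  have hX : (σ ∘ MvPowerSeries.X : Fin (n + 1) → PowerSeries (MvPowerSeries (Fin n) F)) =
      Fin.cons PowerSeries.X (PowerSeries.C ∘ MvPowerSeries.X) :=
    funext (Fin.cases MvPowerSeries.finSuccEquiv_X_zero MvPowerSeries.finSuccEquiv_X_succ)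
  calc Ideal.span (Set.range fun i => σ.symm (φ (x i)))
      = (Ideal.span (Set.range fun i => φ (x i))).map σ.symm.toRingHom := by
        rw [Ideal.map_span, ← Set.range_comp]
        rfl
    _ = (Ideal.span (Set.range (σ ∘ MvPowerSeries.X))).map σ.symm.toRingHom := by
        rw [span_range_eq_span_X_sup_map_C _ h0 h1, hspan, hX, Fin.range_cons, Ideal.span_insert,
          Set.range_comp, Ideal.map_span]
    _ = Ideal.span (Set.range MvPowerSeries.X) := by
        rw [Ideal.map_span, ← Set.range_comp, ← Function.comp_assoc]
        congr 2
        exact funext fun i => σ.symm_apply_apply _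

theorem of_presents {n : ℕ} {E A : Type u} [CommRing E] [CommRing A] [IsDomain A] [IsLocalRing A]
    [IsAdicComplete (IsLocalRing.maximalIdeal A) A] {z : Fin n → A}
    (hz : ∀ {E' : Type u} [CommRing E'] [Algebra.FiniteType ℤ E'] {ε : E' →+* A} {z' : Fin n → E'},
      Function.Injective ε → (∀ k, ε (z' k) = z k) → HasCharPModel z')
    {ι κ : Type*} [Finite ι] [Finite κ] {S : PrimitiveEquations (MvPolynomial ι ℤ) κ}
    {f : Polynomial (MvPolynomial ι ℤ) →+* E} {g : κ → E} (h : S.Presents f g)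
    (hg : Algebra.adjoin ℤ (Set.range g) = ⊤) {x : Fin (n + 1) → E} {k : Fin (n + 1) → κ}
    (hx : ∀ i, g (k i) = x i) {ψ : E →+* PowerSeries A}
    (hψ : (ψ (f S.disc)).map (IsLocalRing.residue A) ≠ 0)
    (h0 : PowerSeries.constantCoeff (ψ (x (Fin.last n))) = 0)
    (h1 : PowerSeries.coeff 1 (ψ (x (Fin.last n))) = 1)
    (hcast : ∀ k : Fin n, PowerSeries.constantCoeff (ψ (x k.castSucc)) = z k) :
    HasCharPModel x := by
  obtain ⟨E', hfg, hzE', q, hq, hlift⟩ := h.exists_subalgebra_fg hg ψ hψ (Set.finite_range z)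
  have : Algebra.FiniteType ℤ E' := E'.fg_iff_finiteType.mp hfg
  obtain ⟨F, _, p, _, _, φ', hφ'⟩ := hz (ε := algebraMap E' A)
    (z' := fun i => ⟨z i, hzE' ⟨i, rfl⟩⟩) Subtype.val_injective fun _ => rfl
  have : IsDomain (MvPowerSeries (Fin n) F) := NoZeroDivisors.to_isDomain _
  obtain ⟨φ, hφ⟩ := hlift φ'
  have hcoeff {m : ℕ} (hm : m < 2) (i : Fin (n + 1)) (a : E')
      (ha : PowerSeries.coeff m (ψ (x i)) = a) : PowerSeries.coeff m (φ (x i)) = φ' a := by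
    have hqa : (q (k i)).coeff m = a := by
      rw [← hx, coeff_eq_of_X_pow_dvd_sub (hq _) hm, Polynomial.coeff_coe,
        Polynomial.coeff_map] at ha
      exact Subtype.ext ha
    rw [← hx, coeff_eq_of_X_pow_dvd_sub (hφ _) hm, Polynomial.coeff_coe, Polynomial.coeff_map, hqa]
  refine .of_powerSeries φ ?_ ?_ ?_
  · simpa using hcoeff two_pos _ 0 (by simpa using h0)
  · exact (hcoeff one_lt_two _ 1 h1).trans (map_one φ')
  · rw [← hφ']
    congr 2
    funext i
    simpa using hcoeff two_pos _ ⟨z i, hzE' ⟨i, rfl⟩⟩ (by simpa using hcast i)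

theorem of_injective {d : ℕ} {K : Type u} [Field K] [CharZero K] {E : Type u} [CommRing E]
    [Algebra.FiniteType ℤ E] {ε : E →+* MvPowerSeries (Fin d) K} {x : Fin d → E}
    (hε : Function.Injective ε) (hx : ∀ i, ε (x i) = MvPowerSeries.X i) : HasCharPModel x := by
  induction d generalizing E with
  | zero =>
    have : Nontrivial E := ε.domain_nontrivial
    exact .of_fin_zero x
  | succ n ih =>
    have : IsDomain (MvPowerSeries (Fin n) K) := NoZeroDivisors.to_isDomain _
    have : IsDomain (MvPowerSeries (Fin (n + 1)) K) := NoZeroDivisors.to_isDomain _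
    have : IsDomain E := hε.isDomain ε
    have : CharZero (MvPowerSeries (Fin (n + 1)) K) :=
      charZero_of_injective_ringHom (f := MvPowerSeries.C (R := K)) (RingHom.injective _)
    have : CharZero E := ⟨fun a b hab => by simpa using congrArg ε hab⟩
    have : IsAdicComplete (IsLocalRing.maximalIdeal (MvPowerSeries (Fin n) K))
        (MvPowerSeries (Fin n) K) := by
      rw [maximalIdeal_mvPowerSeries_eq_span_range_X]
      infer_instance
    obtain ⟨t, ht⟩ := Algebra.FiniteType.out (R := ℤ) (A := E)
    have hg : Algebra.adjoin ℤ (Set.range (Sum.elim ((↑) : t → E) x)) = ⊤ := by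
      rw [eq_top_iff, ← ht]
      exact Algebra.adjoin_mono fun a ha => ⟨.inl ⟨a, ha⟩, rfl⟩
    obtain ⟨ι, _, S, f, hS⟩ := PrimitiveEquations.exists_presents_mvPolynomial hg
    obtain ⟨ψ, e, he, hlast, hcast, hψ⟩ := exists_ringHom_map_constantCoeff_ne_zero
      ((map_ne_zero_iff ε hε).mpr hS.map_disc_ne_zero)
    refine .of_presents (ψ := ψ.comp ε) (k := Sum.inr) (z := MvPowerSeries.X) ih hS hg
      (fun _ => rfl) (map_residue_ne_zero_of_map_constantCoeff_ne_zero hψ) ?_ ?_ fun k => ?_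
    · simp [hx, hlast]
    · simp [hx, hlast]
    · simp [hx, hcast, he]

end HasCharPModel

section Descent

open scoped Pointwise

universe w

theorem exists_finite_forall_mem_span {C M : Type*} [CommRing C] [AddCommGroup M] [Module C M]
    {G : Set M} {v : M} (hv : v ∈ Submodule.span C G) :
    ∃ s : Set C, s.Finite ∧ ∀ (D : Type w) [CommRing D] [Algebra D C] [Module D M]
      [IsScalarTower D C M], s ⊆ Set.range (algebraMap D C) → v ∈ Submodule.span D G := by
  obtain ⟨n, c, g, rfl⟩ := Submodule.mem_span_set'.mp hv
  refine ⟨Set.range c, Set.finite_range c, fun D _ _ _ _ hs => sum_mem fun i _ => ?_⟩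
  obtain ⟨a, ha⟩ := hs ⟨i, rfl⟩
  rw [← ha, algebraMap_smul]
  exact Submodule.smul_mem _ a (Submodule.subset_span (g i).2)

theorem powerIdeal_smul_top_eq_span {C : Type*} [CommRing C] {d : ℕ} (x : Fin d → C)
    (t : Fin d → ℕ) (r : ℕ) :
    powerIdeal x t • (⊤ : Submodule C (Fin r → C)) =
      Submodule.span C ((Set.range fun i => x i ^ t i) • Set.range (Pi.basisFun C (Fin r))) := by
  rw [powerIdeal, ← (Pi.basisFun C (Fin r)).span_eq, Submodule.span_smul_span]

theorem compLeft_linearMap_basisFun {C D ι : Type*} [CommRing C] [CommRing D] [Algebra D C]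
    [Finite ι] (j : ι) :
    (Algebra.linearMap D C).compLeft ι (Pi.basisFun D ι j) = Pi.basisFun C ι j := by
  classical
  ext k
  obtain rfl | hk := eq_or_ne k j <;> simp [*]

theorem image_compLeft_range_pow_smul_range_basisFun {C D : Type*} [CommRing C] [CommRing D]
    [Algebra D C] {d : ℕ} {x : Fin d → C} {y : Fin d → D} (hy : ∀ i, algebraMap D C (y i) = x i)
    (t : Fin d → ℕ) (r : ℕ) :
    (Algebra.linearMap D C).compLeft (Fin r) ''
        ((Set.range fun i => y i ^ t i) • Set.range (Pi.basisFun D (Fin r))) =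
      (Set.range fun i => x i ^ t i) • Set.range (Pi.basisFun C (Fin r)) := by
  rw [← Set.image2_smul, ← Set.image2_smul, Set.image_image2_distrib (f' := (· • ·))
    (g₁ := algebraMap D C) (g₂ := (Algebra.linearMap D C).compLeft (Fin r)) fun a v => by simp,
    ← Set.range_comp, ← Set.range_comp]
  simp only [Function.comp_def, map_pow, hy, compLeft_linearMap_basisFun]

namespace CyclicChain

theorem exists_finite_restrictScalars {C M ι : Type*} [CommRing C] [AddCommGroup M] [Module C M]
    [Finite ι] {x : ι → C} {G : Set M} {P : Submodule C M} {h : ℕ}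
    (hP : CyclicChain (Ideal.span (Set.range x)) (Submodule.span C G) P h) :
    ∃ (s : Set C) (T : Set M), s.Finite ∧ T.Finite ∧ Submodule.span C (G ∪ T) = P ∧
      ∀ (D : Type w) [CommRing D] [Algebra D C] [Module D M] [IsScalarTower D C M],
        s ⊆ Set.range (algebraMap D C) → ∀ y : ι → D, (∀ i, algebraMap D C (y i) = x i) →
          CyclicChain (Ideal.span (Set.range y)) (Submodule.span D G)
            (Submodule.span D (G ∪ T)) h := by
  induction hP with
  | refl =>
    refine ⟨∅, ∅, Set.finite_empty, Set.finite_empty, by rw [Set.union_empty],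
      fun D _ _ _ _ _ y _ => ?_⟩
    rw [Set.union_empty]
    exact refl
  | adjoin m _ hm ih =>
    obtain ⟨s, T, hs, hT, rfl, hchain⟩ := ih
    choose c hc hcm using fun i =>
      exists_finite_forall_mem_span.{w} (hm (x i) (Ideal.subset_span ⟨i, rfl⟩))
    refine ⟨s ∪ ⋃ i, c i, insert m T, hs.union (Set.finite_iUnion hc), hT.insert m, ?_,
      fun D _ _ _ _ hD y hy => ?_⟩
    · rw [Set.union_insert, Submodule.span_insert, sup_comm]
    · obtain ⟨hsD, hcD⟩ := Set.union_subset_iff.mp hD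
      rw [Set.union_insert, Submodule.span_insert, sup_comm]
      refine (hchain D hsD y hy).adjoin m fun a ha => ?_
      have hy_mem : Ideal.span (Set.range y) ≤
          (Submodule.span D (G ∪ T)).comap (LinearMap.toSpanSingleton D M m) := by
        rw [Ideal.span_le]
        rintro _ ⟨i, rfl⟩
        have him := hcm i D (Set.iUnion_subset_iff.mp hcD i)
        rwa [← hy i, algebraMap_smul] at him
      exact hy_mem ha

theorem exists_finite_descend_pi {C : Type*} [CommRing C] {d r h : ℕ} {x : Fin d → C}
    {t : Fin d → ℕ} (hC : CyclicChain (Ideal.span (Set.range x))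
      (powerIdeal x t • (⊤ : Submodule C (Fin r → C))) ⊤ h) :
    ∃ s : Set C, s.Finite ∧ ∀ (D : Type w) [CommRing D] [Algebra D C],
      Function.Injective (algebraMap D C) → s ⊆ Set.range (algebraMap D C) →
        ∀ y : Fin d → D, (∀ i, algebraMap D C (y i) = x i) →
          CyclicChain (Ideal.span (Set.range y))
            (powerIdeal y t • (⊤ : Submodule D (Fin r → D))) ⊤ h := by
  rw [powerIdeal_smul_top_eq_span] at hC
  obtain ⟨s, T, hs, hT, htop, hchain⟩ := hC.exists_finite_restrictScalars
  choose c hc hce using fun j => exists_finite_forall_mem_span.{w}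
    (htop.ge (Submodule.mem_top (x := Pi.basisFun C (Fin r) j)))
  refine ⟨s ∪ (⋃ j, c j) ∪ ⋃ v ∈ T, Set.range v, (hs.union (Set.finite_iUnion hc)).union
    (hT.biUnion fun v _ => Set.finite_range v), fun D _ _ hinj hD y hy => ?_⟩
  simp only [Set.union_subset_iff, Set.iUnion_subset_iff] at hD
  obtain ⟨⟨hsD, hcD⟩, hTD⟩ := hD
  let f : (Fin r → D) →ₗ[D] (Fin r → C) := (Algebra.linearMap D C).compLeft (Fin r)
  have hf : Function.Injective f := hinj.comp_left
  have hG := image_compLeft_range_pow_smul_range_basisFun hy t r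
  have hbot := powerIdeal_smul_top_eq_span y t r
  rw [← Submodule.comap_map_eq_of_injective hf (Submodule.span D _), Submodule.map_span,
    hG] at hbot
  have htopD : (⊤ : Submodule D (Fin r → D)) = (Submodule.span D
      ((Set.range fun i => x i ^ t i) • Set.range (Pi.basisFun C (Fin r)) ∪ T)).comap f := by
    rw [eq_comm, eq_top_iff, ← (Pi.basisFun D (Fin r)).span_eq, Submodule.span_le]
    rintro _ ⟨j, rfl⟩
    simpa only [SetLike.mem_coe, Submodule.mem_comap, f, compLeft_linearMap_basisFun]
      using hce j D (hcD j)
  rw [hbot, htopD]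
  refine (hchain D hsD y hy).comap ?_
  rw [Submodule.span_le, Set.union_subset_iff, ← hG]
  refine ⟨Set.image_subset_range _ _, fun v hv => ?_⟩
  choose a ha using fun k => hTD v hv ⟨k, rfl⟩
  exact ⟨a, funext ha⟩

end CyclicChain

end Descent

theorem nontrivial_tensorProduct_of_isIntegral (E L D : Type*) [CommRing E] [Field L] [CommRing D]
    [Algebra E L] [Algebra E D] [Algebra.IsIntegral E D] [FaithfulSMul E D] :
    Nontrivial (L ⊗[E] D) := by
  let q := RingHom.ker (algebraMap E L)
  have hq : q.IsPrime := RingHom.ker_isPrime _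
  have : Nontrivial (q.ResidueField ⊗[E] D) :=
    (PrimeSpectrum.nontrivial_iff_mem_rangeComap ⟨q, hq⟩).mpr
      (Algebra.IsIntegral.comap_surjective E D _)
  let _ : Algebra q.ResidueField L :=
    (Ideal.ResidueField.lift q (algebraMap E L) le_rfl fun a ha => by
      simpa [q, RingHom.mem_ker, IsUnit.mem_submonoid_iff] using ha).toAlgebra
  have : IsScalarTower E q.ResidueField L :=
    .of_algebraMap_eq fun a => (Ideal.ResidueField.lift_algebraMap ..).symm
  exact (Algebra.TensorProduct.cancelBaseChange E q.ResidueField L L D).injective.nontrivial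

theorem algebraMap_tensorProduct_injective_of_isIntegral (E A D : Type*) [CommRing E] [CommRing A]
    [IsDomain A] [CommRing D] [Algebra E A] [Algebra E D] [Algebra.IsIntegral E D]
    [FaithfulSMul E D] : Function.Injective (algebraMap A (A ⊗[E] D)) := by
  let L := FractionRing A
  have := nontrivial_tensorProduct_of_isIntegral E L D
  have hL : Function.Injective (algebraMap L (L ⊗[E] D) ∘ algebraMap A L) :=
    (algebraMap L (L ⊗[E] D)).injective.comp (IsFractionRing.injective A L)
  refine .of_comp (f := Algebra.TensorProduct.map (IsScalarTower.toAlgHom E A L) (.id E D)) ?_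
  convert hL
  ext a
  simp [Algebra.TensorProduct.algebraMap_apply]

theorem natCast_le_ringKrullDim_mvPowerSeries (K : Type*) [Field K] (d : ℕ) :
    d ≤ ringKrullDim (MvPowerSeries (Fin d) K) := by
  induction d with
  | zero => exact_mod_cast ringKrullDim_nonneg_of_nontrivial
  | succ n ih =>
    rw [ringKrullDim_eq_of_ringEquiv (MvPowerSeries.finSuccEquiv K n).toRingEquiv]
    refine le_trans ?_ ringKrullDim_succ_le_ringKrullDim_powerseries
    push_cast
    gcongr

theorem HasCharPModel.freeQuasilengthBound {E : Type u} [CommRing E] {d : ℕ} {x : Fin d → E}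
    (hx : HasCharPModel x) (D : Type*) [CommRing D] [Algebra E D] [Module.Finite E D]
    [FaithfulSMul E D] : FreeQuasilengthBound fun i => algebraMap E D (x i) := by
  obtain ⟨F, _, p, _, _, φ, hφ⟩ := hx
  have : IsDomain (MvPowerSeries (Fin d) F) := NoZeroDivisors.to_isDomain _
  let _ : Algebra E (MvPowerSeries (Fin d) F) := φ.toAlgebra
  have hinj := algebraMap_tensorProduct_injective_of_isIntegral E (MvPowerSeries (Fin d) F) D
  have : CharP (MvPowerSeries (Fin d) F) p :=
    charP_of_injective_ringHom (f := MvPowerSeries.C) (RingHom.injective _) p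
  have : CharP (MvPowerSeries (Fin d) F ⊗[E] D) p := charP_of_injective_ringHom hinj p
  have hmax : (Ideal.span (Set.range fun i => φ (x i))).radical =
      IsLocalRing.maximalIdeal (MvPowerSeries (Fin d) F) := by
    rw [hφ, ← maximalIdeal_mvPowerSeries_eq_span_range_X]
    exact (IsLocalRing.maximalIdeal.isMaximal _).isPrime.radical
  have hbound := FreeQuasilengthBound.of_finite_of_charP
    (natCast_le_ringKrullDim_mvPowerSeries F d) hmax hinj p
  refine .of_map (φ := (Algebra.TensorProduct.includeRight :
    D →ₐ[E] MvPowerSeries (Fin d) F ⊗[E] D).toRingHom) ?_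
  convert hbound using 2 with i
  exact Algebra.TensorProduct.includeRight.commutes (x i)

theorem FreeQuasilengthBound.of_forall_hasCharPModel {A : Type u} {C : Type v}
    [CommRing A] [CommRing C] [Algebra A C] [Algebra.IsIntegral A C] [FaithfulSMul A C] {d : ℕ}
    {x : Fin d → A} (hx : ∀ (E : Type u) [CommRing E] [Algebra.FiniteType ℤ E] (ε : E →+* A),
      Function.Injective ε → ∀ y : Fin d → E, (∀ i, ε (y i) = x i) → HasCharPModel y) :
    FreeQuasilengthBound fun i => algebraMap A C (x i) := by
  intro r t h ht hchain
  obtain ⟨s, hs, hdescend⟩ := hchain.exists_finite_descend_pi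
  have : Finite s := hs
  choose q hq hq0 using fun c : s => Algebra.IsIntegral.isIntegral (R := A) (c : C)
  obtain ⟨E, hE, hxE, hqE⟩ :=
    exists_subalgebra_fg_forall_mem_lifts (R := ℤ) q (Set.finite_range x)
  let y : Fin d → E := fun i => ⟨x i, hxE ⟨i, rfl⟩⟩
  let D := Algebra.adjoin E s
  have hint : ∀ c ∈ s, IsIntegral E c := by
    intro c hc
    obtain ⟨q', hq', -, hmonic⟩ := Polynomial.lifts_and_natDegree_eq_and_monic (hqE ⟨c, hc⟩) (hq _)
    refine ⟨q', hmonic, ?_⟩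
    rw [IsScalarTower.algebraMap_eq E A C, ← Polynomial.eval₂_map, hq']
    exact hq0 ⟨c, hc⟩
  have : Module.Finite E D := Module.Finite.iff_fg.mpr (fg_adjoin_of_finite hs hint)
  have hEC : Function.Injective (algebraMap E C) :=
    (FaithfulSMul.algebraMap_injective A C).comp Subtype.val_injective
  have : FaithfulSMul E D := (faithfulSMul_iff_algebraMap_injective E D).mpr
    (.of_comp (f := algebraMap D C) hEC)
  have : Algebra.FiniteType ℤ E := E.fg_iff_finiteType.mp hE
  have hy : HasCharPModel y := hx E (algebraMap E A) Subtype.val_injective y fun _ => rfl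
  exact hy.freeQuasilengthBound D r t h ht <| hdescend D Subtype.val_injective
    (fun c hc => ⟨⟨c, Algebra.subset_adjoin hc⟩, rfl⟩) _ fun _ => rfl

theorem FreeQuasilengthBound.of_mvPowerSeries {K : Type u} [Field K] [CharZero K] {C : Type v}
    [CommRing C] {d : ℕ} [Algebra (MvPowerSeries (Fin d) K) C]
    [Algebra.IsIntegral (MvPowerSeries (Fin d) K) C] [FaithfulSMul (MvPowerSeries (Fin d) K) C] :
    FreeQuasilengthBound fun i : Fin d =>
      algebraMap (MvPowerSeries (Fin d) K) C (MvPowerSeries.X i) :=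
  .of_forall_hasCharPModel fun _ _ _ _ hε _ hy => .of_injective hε hy

section AdicFiniteness

variable {A : Type*} [CommRing A] {I : Ideal A}

theorem isPrecomplete_finFun [IsPrecomplete I A] (n : ℕ) : IsPrecomplete I (Fin n → A) := by
  refine AdicCompletion.of_surjective_iff.mp fun y => ?_
  choose v hv using fun i => AdicCompletion.of_surjective I A (AdicCompletion.piEquivFin I n y i)
  refine ⟨v, (AdicCompletion.piEquivFin I n).injective (funext fun i => ?_)⟩
  rw [← hv i, AdicCompletion.piEquivFin_apply]
  rfl

theorem finite_of_fg_sup_smul_top_eq_top [IsPrecomplete I A] {N : Type*} [AddCommGroup N]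
    [Module A N] [IsHausdorff I N] {P : Submodule A N} (hP : P.FG) (hPI : P ⊔ I • ⊤ = ⊤) :
    Module.Finite A N := by
  obtain ⟨n, v, rfl⟩ := Submodule.fg_iff_exists_fin_generating_family.mp hP
  have := isPrecomplete_finFun (I := I) n
  refine Module.Finite.of_surjective (Fintype.linearCombination A v)
    (surjective_of_mkQ_comp_surjective (I := I) ?_)
  rwa [← LinearMap.range_eq_top, LinearMap.range_comp, Fintype.range_linearCombination,
    Submodule.map_mkQ_eq_top, sup_comm]

variable {C : Type*} [CommRing C] [Algebra A C] {m : Ideal C}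

theorem restrictScalars_span_le_span_sup_mul
    (hres : ∀ c : C, ∃ a : A, c - algebraMap A C a ∈ m) (s : Set C) :
    (Ideal.span s).restrictScalars A ≤
      Submodule.span A s ⊔ (m * Ideal.span s).restrictScalars A := by
  intro c hc
  rw [Submodule.restrictScalars_mem] at hc
  induction hc using Submodule.span_induction with
  | mem y hy => exact Submodule.mem_sup_left (Submodule.subset_span hy)
  | zero => exact zero_mem _
  | add y z _ _ hy hz => exact add_mem hy hz
  | smul c y hy ih =>
    obtain ⟨a, ha⟩ := hres c
    have hsplit : c • y = a • y + (c - algebraMap A C a) * y := by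
      rw [smul_eq_mul, Algebra.smul_def]
      ring
    rw [hsplit]
    exact add_mem (Submodule.smul_mem _ _ ih) (Submodule.mem_sup_right (Ideal.mul_mem_mul ha hy))

theorem exists_fg_sup_restrictScalars_pow_eq_top (hm : m.FG)
    (hres : ∀ c : C, ∃ a : A, c - algebraMap A C a ∈ m) (n : ℕ) :
    ∃ P : Submodule A C, P.FG ∧ P ⊔ (m ^ n).restrictScalars A = ⊤ := by
  induction n with
  | zero => exact ⟨⊥, Submodule.fg_bot, by simp⟩
  | succ n ih =>
    obtain ⟨P, hP, htop⟩ := ih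
    obtain ⟨s, hs⟩ := hm.pow (n := n)
    refine ⟨P ⊔ Submodule.span A s, hP.sup ⟨s, rfl⟩, eq_top_iff.mpr ?_⟩
    have hstep := restrictScalars_span_le_span_sup_mul (A := A) hres s
    rw [hs, ← pow_succ'] at hstep
    rw [sup_assoc, ← htop]
    exact sup_le_sup_left hstep P

theorem finite_of_isAdicComplete [IsPrecomplete I A] [IsHausdorff m C] (hm : m.FG)
    (hres : ∀ c : C, ∃ a : A, c - algebraMap A C a ∈ m) (hIm : I.map (algebraMap A C) ≤ m)
    (hmI : m ≤ (I.map (algebraMap A C)).radical) : Module.Finite A C := by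
  have : IsHausdorff I C := .of_map hIm
  obtain ⟨n, hn⟩ := Ideal.exists_pow_le_of_le_radical_of_fg hmI hm
  obtain ⟨P, hP, htop⟩ := exists_fg_sup_restrictScalars_pow_eq_top hm hres n
  refine finite_of_fg_sup_smul_top_eq_top (I := I) hP (eq_top_iff.mpr (htop.ge.trans ?_))
  rw [Ideal.smul_top_eq_map]
  exact sup_le_sup_left (Submodule.restrictScalars_mono A hn) P

end AdicFiniteness

section CompleteLocal

open IsLocalRing

theorem exists_residueField_ringHom (C : Type*) [CommRing C] [IsLocalRing C] [Algebra ℚ C]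
    [IsAdicComplete (maximalIdeal C) C] :
    ∃ c : ResidueField C →+* C, ∀ k, residue C (c k) = k := by
  obtain ⟨s, hs⟩ := exists_isTranscendenceBasis ℚ (ResidueField C)
  have := hs.isAlgebraic_field
  have : Algebra.FormallySmooth ℚ (ResidueField C) := .of_algebraicIndependent_of_isSeparable hs.1
  obtain ⟨c, hc⟩ := Algebra.FormallySmooth.exists_mkₐ_comp_eq_of_isAdicComplete
    (I := maximalIdeal C) (AlgHom.id ℚ (ResidueField C))
  exact ⟨c.toRingHom, fun k => DFunLike.congr_fun hc k⟩

theorem length_quotient_le_length_quotient_map {R C : Type*} [CommRing R] [CommRing C]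
    [Algebra R C] {J : Ideal R} (e : C →ₐ[R] R ⧸ J) :
    Module.length R (R ⧸ J) ≤ Module.length C (C ⧸ J.map (algebraMap R C)) := by
  let _ : Algebra C (R ⧸ J) := e.toRingHom.toAlgebra
  have : IsScalarTower R C (R ⧸ J) := .of_algebraMap_eq fun r => (e.commutes r).symm
  have he : Function.Surjective (algebraMap C (R ⧸ J)) :=
    .of_comp (g := algebraMap R C) <| by
      rw [← RingHom.coe_comp, ← IsScalarTower.algebraMap_eq]
      exact Ideal.Quotient.mk_surjective
  have hker : J.map (algebraMap R C) ≤ LinearMap.ker (Algebra.linearMap C (R ⧸ J)) := by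
    refine Ideal.map_le_iff_le_comap.mpr fun a ha => ?_
    change e (algebraMap R C a) = 0
    rw [e.commutes]
    exact Ideal.Quotient.eq_zero_iff_mem.mpr ha
  calc Module.length R (R ⧸ J) = Module.length (R ⧸ J) (R ⧸ J) :=
        Module.length_eq_of_surjective Ideal.Quotient.mk_surjective
    _ = Module.length C (R ⧸ J) := (Module.length_eq_of_surjective he).symm
    _ ≤ Module.length C (C ⧸ J.map (algebraMap R C)) :=
        Module.length_le_of_surjective (Submodule.liftQ _ _ hker) fun y =>
          (he y).imp' Submodule.Quotient.mk fun _ h => h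

theorem ringKrullDim_mvPowerSeries_le (K : Type*) [Field K] (d : ℕ) :
    ringKrullDim (MvPowerSeries (Fin d) K) ≤ d := by
  have : IsNoetherianRing (MvPowerSeries (Fin d) K) := MvPowerSeries.isNoetherianRing _
  refine (ringKrullDim_le_spanFinrank_maximalIdeal _).trans ?_
  rw [maximalIdeal_mvPowerSeries_eq_span_range_X]
  refine mod_cast (Submodule.spanFinrank_span_le_ncard_of_finite (Set.finite_range _)).trans ?_
  rw [← Set.image_univ]
  exact (Set.ncard_image_le Set.finite_univ).trans (by simp)

theorem CyclicChain.map_ideal {A S : Type*} [CommRing A] [CommRing S] {J N P : Ideal A} {h : ℕ}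
    (hNP : CyclicChain J N P h) (φ : A →+* S) :
    CyclicChain (J.map φ) (N.map φ) (P.map φ) h :=
  hNP.span_image φ.toSemilinearMap

theorem injective_of_growsAtLeastPow {A C : Type*} [CommRing A] [IsDomain A] [IsNoetherianRing A]
    [IsLocalRing A] [CommRing C] {d : ℕ} (hd : ringKrullDim A ≤ d) {x : Fin d → A}
    (hx : (Ideal.span (Set.range x)).radical = maximalIdeal A) (α : A →+* C)
    (hfin : Module.length C (C ⧸ Ideal.span (Set.range fun i => α (x i))) ≠ ⊤)
    (hgrow : GrowsAtLeastPow d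
      fun n => Module.length C (C ⧸ powerIdeal (fun i => α (x i)) fun _ => n)) :
    Function.Injective α := by
  refine (injective_iff_map_eq_zero α).mpr fun c hc => by_contra fun hc0 => ?_
  obtain ⟨B, hB⟩ := exists_chain_span_singleton_sup_powerIdeal (mem_nonZeroDivisors_of_ne_zero hc0)
    hd hx
  obtain ⟨L, hL⟩ := ENat.ne_top_iff_exists.mp hfin
  obtain ⟨D, hD⟩ := hgrow
  obtain ⟨n, hDn, hn⟩ := (hD.and (Filter.eventually_gt_atTop (D * L * B))).exists
  obtain ⟨l, hl, hchain⟩ := hB n (by lia)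
  have hchain' : CyclicChain (Ideal.span (Set.range fun i => α (x i)))
      (powerIdeal (fun i => α (x i)) fun _ => n) ⊤ l := by
    have hmap := hchain.map_ideal α
    have hc_map : (Ideal.span {c}).map α = ⊥ := by
      rw [Ideal.map_span, Set.image_singleton, hc, Ideal.span_singleton_zero]
    rwa [Ideal.map_sup, hc_map, bot_sup_eq, map_powerIdeal, Ideal.map_top, Ideal.map_span,
      ← Set.range_comp] at hmap
  have hlength := hchain'.length_quotient_le (A := C)
  rw [← hL] at hlength
  have hpow : n ^ d ≤ D * (l * L) := by
    exact_mod_cast hDn.trans (mul_le_mul' (le_refl (D : ℕ∞)) hlength)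
  refine hn.not_ge (Nat.le_of_mul_le_mul_left ?_ (pow_pos (by lia : 0 < n) d))
  calc n ^ d * n ≤ D * (l * L) * n := by gcongr
    _ = D * L * (l * n) := by ring
    _ ≤ D * L * (B * n ^ d) := by gcongr
    _ = n ^ d * (D * L * B) := by ring

theorem FreeQuasilengthBound.of_isAdicComplete {C : Type u} [CommRing C] [IsLocalRing C]
    [Algebra ℚ C] [IsAdicComplete (maximalIdeal C) C] (hm : (maximalIdeal C).FG) {d : ℕ}
    {x : Fin d → C} (hx : (Ideal.span (Set.range x)).radical = maximalIdeal C)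
    (hgrow : GrowsAtLeastPow d fun n => Module.length C (C ⧸ maximalIdeal C ^ n)) :
    FreeQuasilengthBound x := by
  let A := MvPowerSeries (Fin d) (ResidueField C)
  have hxm : Ideal.span (Set.range x) ≤ maximalIdeal C := Ideal.le_radical.trans hx.le
  obtain ⟨c, hc⟩ := exists_residueField_ringHom C
  obtain ⟨α, hαc, hαX⟩ := exists_mvPowerSeries_ringHom (maximalIdeal C) c
    fun i => hxm (Ideal.subset_span ⟨i, rfl⟩)
  obtain rfl : (fun i => α (MvPowerSeries.X i)) = x := funext hαX
  let _ : Algebra A C := α.toAlgebra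
  have hmap : (Ideal.span (Set.range MvPowerSeries.X)).map (algebraMap A C) =
      Ideal.span (Set.range fun i => α (MvPowerSeries.X i)) := by
    rw [Ideal.map_span, ← Set.range_comp]
    rfl
  have hres (k : C) : ∃ a : A, k - algebraMap A C a ∈ maximalIdeal C := by
    refine ⟨MvPowerSeries.C (residue C k), (residue_eq_zero_iff _).mp ?_⟩
    change residue C (k - α _) = 0
    rw [hαc, map_sub, hc, sub_self]
  have : Module.Finite A C := finite_of_isAdicComplete hm hres (hmap.trans_le hxm)
    (hx.ge.trans_eq (congrArg Ideal.radical hmap.symm))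
  have : IsNoetherianRing A := MvPowerSeries.isNoetherianRing _
  have : IsNoetherianRing C := IsNoetherianRing.of_finite A C
  have : IsDomain A := NoZeroDivisors.to_isDomain _
  have hX : (Ideal.span (Set.range MvPowerSeries.X)).radical = maximalIdeal A := by
    rw [← maximalIdeal_mvPowerSeries_eq_span_range_X]
    exact (maximalIdeal.isMaximal A).isPrime.radical
  have hinj : Function.Injective α := injective_of_growsAtLeastPow
    (ringKrullDim_mvPowerSeries_le _ d) hX α (length_quotient_ne_top_of_radical_eq hx)
    (hgrow.mono fun n => Module.length_le_of_surjective _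
      (Submodule.factor_surjective (powerIdeal_const_le_pow hxm n)))
  have : FaithfulSMul A C := (faithfulSMul_iff_algebraMap_injective A C).mpr hinj
  have : CharZero (ResidueField C) := algebraRat.charZero _
  exact FreeQuasilengthBound.of_mvPowerSeries (K := ResidueField C) (d := d) (C := C)

end CompleteLocal

section LocalDomain

open IsLocalRing

variable {R : Type u} [CommRing R] [IsNoetherianRing R] [IsLocalRing R] {d : ℕ} {x : Fin d → R}

theorem FreeQuasilengthBound.of_algebra_rat [Algebra ℚ R] (hd : d ≤ ringKrullDim R)
    (hx : (Ideal.span (Set.range x)).radical = maximalIdeal R) : FreeQuasilengthBound x := by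
  let C := AdicCompletion (maximalIdeal R) R
  have hmax : maximalIdeal C = (maximalIdeal R).map (algebraMap R C) :=
    AdicCompletion.maximalIdeal_eq_map
  have hspan : Ideal.span (Set.range fun i => algebraMap R C (x i)) =
      (Ideal.span (Set.range x)).map (algebraMap R C) := by
    rw [Ideal.map_span, ← Set.range_comp]
    rfl
  let _ : Algebra ℚ C := ((algebraMap R C).comp (algebraMap ℚ R)).toAlgebra
  refine .of_map (φ := algebraMap R C) (.of_isAdicComplete ?_ (le_antisymm ?_ ?_) ?_)
  · rw [hmax]
    exact (maximalIdeal R).fg_of_isNoetherianRing.map _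
  · rw [hspan, (maximalIdeal.isMaximal C).isPrime.radical_le_iff, hmax]
    exact Ideal.map_mono (Ideal.le_radical.trans hx.le)
  · rw [hspan, hmax]
    exact (Ideal.map_mono hx.ge).trans (Ideal.map_radical_le _)
  · refine (growsAtLeastPow_length_quotient_maximalIdeal_pow hd).mono fun n => ?_
    rw [hmax, ← Ideal.map_pow]
    exact length_quotient_le_length_quotient_map (AdicCompletion.evalₐ _ n)

theorem FreeQuasilengthBound.of_isField_subring (hfield : ∃ K : Subring R, IsField K)
    (hd : d ≤ ringKrullDim R) (hx : (Ideal.span (Set.range x)).radical = maximalIdeal R) :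
    FreeQuasilengthBound x := by
  obtain ⟨K, hK⟩ := hfield
  let _ : Field K := hK.toField
  obtain ⟨p, _⟩ := CharP.exists K
  have : CharP R p := charP_of_injective_ringHom K.subtype_injective p
  rcases CharP.char_is_prime_or_zero K p with hp | rfl
  · have : Fact p.Prime := ⟨hp⟩
    exact .of_finite_of_charP hd hx Function.injective_id p
  · have : CharZero K := CharP.charP_to_charZero K
    let _ : Algebra ℚ R := (K.subtype.comp (algebraMap ℚ K)).toAlgebra
    exact .of_algebra_rat hd hx

end LocalDomain

/-- Over a `d`-dimensional Noetherian local domain containing a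
field, with `x₁, …, x_d` a system of parameters, the content of every finitely
generated module equals its torsion-free rank; in particular content is additive
on short exact sequences. -/
theorem content_eq_rank_of_domain
    {R : Type u} [CommRing R] [IsDomain R] [IsNoetherianRing R] [IsLocalRing R]
    (hfield : ∃ K : Subring R, IsField K)
    {d : ℕ} (hd : ringKrullDim R = d)
    (x : Fin d → R) (hx : ∀ i, x i ∈ IsLocalRing.maximalIdeal R)
    (hxparam : (Ideal.span (Set.range x)).radical = IsLocalRing.maximalIdeal R) :
    (∀ (M : Type u) [AddCommGroup M] [Module R M] [Module.Finite R M],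
        content x M = Module.finrank (FractionRing R) (FractionRing R ⊗[R] M)) ∧
    (∀ (L M N : Type u) [AddCommGroup L] [Module R L] [AddCommGroup M] [Module R M]
        [AddCommGroup N] [Module R N]
        [Module.Finite R L] [Module.Finite R M] [Module.Finite R N]
        (f : L →ₗ[R] M) (g : M →ₗ[R] N),
        Function.Injective f → Function.Surjective g → Function.Exact f g →
        content x M = content x L + content x N) := by
  have hbound : FreeQuasilengthBound x := .of_isField_subring hfield hd.ge hxparam
  refine ⟨fun M _ _ _ => ?_, fun L M N _ _ _ _ _ _ _ _ _ f g hf hg hfg => ?_⟩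
  · rw [hbound.content_eq_finrank hd.le hxparam M,
      (TensorProduct.isBaseChange R M (FractionRing R)).finrank_eq]
  · exact hbound.content_add hd.le hxparam hf hg hfg
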